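/- arXiv:2101.04089 — 2 statements merged into one kernel-verified Lean document; each statement's English description precedes it below -/
import Mathlib

section
/- Three-balls inequality with explicit frequency dependence (Lemma 2.3, interior version, classical formulation): Let n ≥ 2 and let Ω ⊂ ℝⁿ be a bounded open set. Let κ > 1; let q : Ω → ℝ be C¹ with κ⁻¹ < q < κ and with ‖q‖_{C¹(Ω)} ≤ Q, and let V : Ω → ℝ be measurable with |V| ≤ V₀. Then there exist α ∈ (0,1) and C > 1, depending only on Ω, V₀, κ and Q, such that for every k ≥ 1, every C² function u : Ω → ℝ satisfying Δu + k²qu + Vu = 0 on Ω, and every x₀ ∈ Ω and r > 0 with the closed ball B_{4r}(x₀) ⊂ Ω, one has ‖u‖_{L²(B_r(x₀))} ≤ C e^{Ck} ‖u‖_{L²(B_{2r}(x₀))}^{1-α} ‖u‖_{L²(B_{r/2}(x₀))}^{α}. -/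
open MeasureTheory Real
open scoped InnerProductSpace

/-- The `j`-th partial derivative of `u : ℝⁿ → ℝ`. -/
noncomputable def pderiv' {n : ℕ} (j : Fin n) (u : EuclideanSpace ℝ (Fin n) → ℝ)
    (x : EuclideanSpace ℝ (Fin n)) : ℝ :=
  fderiv ℝ u x (EuclideanSpace.single j 1)

/-- The Laplacian of `u : ℝⁿ → ℝ`, as the sum of the second partial derivatives. -/
noncomputable def lap {n : ℕ} (u : EuclideanSpace ℝ (Fin n) → ℝ)
    (x : EuclideanSpace ℝ (Fin n)) : ℝ :=
  ∑ j : Fin n, pderiv' j (pderiv' j u) x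

lemma hasDerivAt_posPow (m : ℕ) (t : ℝ) :
    HasDerivAt (fun t : ℝ => (max t 0) ^ (m + 2)) (((m : ℝ) + 2) * (max t 0) ^ (m + 1)) t := by
  rcases lt_trichotomy t 0 with h | h | h
  · have : (fun t : ℝ => (max t 0) ^ (m + 2)) =ᶠ[nhds t] fun _ => 0 := by
      filter_upwards [Iio_mem_nhds h] with y hy
      rw [max_eq_right (le_of_lt hy)]; simp
    rw [max_eq_right h.le]
    simpa using (hasDerivAt_const t (0 : ℝ)).congr_of_eventuallyEq this
  · subst h
    have h2 : HasDerivAt (fun t : ℝ => t * t) 0 0 := by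
      have := hasDerivAt_pow 2 (0 : ℝ)
      simpa [← pow_two] using this
    rw [hasDerivAt_iff_isLittleO_nhds_zero] at h2 ⊢
    simp at h2 ⊢
    refine Asymptotics.IsBigO.trans_isLittleO ?_ h2
    refine Asymptotics.IsBigO.of_bound 1 ?_
    filter_upwards [Ioo_mem_nhds (show (-1 : ℝ) < 0 by norm_num) (show (0 : ℝ) < 1 by norm_num)]
      with y hy
    have h0 : 0 ≤ max y 0 := le_max_right _ _
    have h1 : max y 0 ≤ 1 := max_le hy.2.le zero_le_one
    have h3 : max y 0 ≤ |y| := max_le (le_abs_self _) (abs_nonneg _)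
    rw [Real.norm_of_nonneg (by positivity), Real.norm_eq_abs, abs_mul, one_mul, pow_add]
    calc max y 0 ^ m * max y 0 ^ 2 ≤ 1 * max y 0 ^ 2 := by
          gcongr; exact pow_le_one₀ h0 h1
      _ = max y 0 * max y 0 := by ring
      _ ≤ |y| * |y| := by gcongr
  · have : (fun t : ℝ => (max t 0) ^ (m + 2)) =ᶠ[nhds t] fun t => t ^ (m + 2) := by
      filter_upwards [Ioi_mem_nhds h] with y hy
      rw [max_eq_left (le_of_lt hy)]
    rw [max_eq_left h.le]
    have := (hasDerivAt_pow (m + 2) t).congr_of_eventuallyEq this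
    simpa using this

/-- the weight -/
noncomputable def wt {n : ℕ} (x₀ : EuclideanSpace ℝ (Fin n)) (s : ℝ)
    (x : EuclideanSpace ℝ (Fin n)) : ℝ := max (s - ‖x - x₀‖ ^ 2) 0

lemma wt_nonneg {n : ℕ} (x₀ : EuclideanSpace ℝ (Fin n)) (s : ℝ)
    (x : EuclideanSpace ℝ (Fin n)) : 0 ≤ wt x₀ s x := le_max_right _ _

lemma wt_le {n : ℕ} (x₀ : EuclideanSpace ℝ (Fin n)) {s : ℝ} (hs : 0 ≤ s)
    (x : EuclideanSpace ℝ (Fin n)) : wt x₀ s x ≤ s :=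
  max_le (by linarith [sq_nonneg ‖x - x₀‖]) hs

lemma wt_continuous {n : ℕ} (x₀ : EuclideanSpace ℝ (Fin n)) (s : ℝ) : Continuous (wt x₀ s) := by
  unfold wt; fun_prop

lemma wt_zero {n : ℕ} (x₀ : EuclideanSpace ℝ (Fin n)) {s R : ℝ} (hR : 0 < R) (hs : s < R ^ 2)
    (x : EuclideanSpace ℝ (Fin n)) (hx : x ∉ Metric.closedBall x₀ R) : wt x₀ s x = 0 := by
  rw [Metric.mem_closedBall, dist_eq_norm, not_le] at hx
  apply max_eq_right
  nlinarith

lemma wt_hasFDerivAt {n : ℕ} (x₀ : EuclideanSpace ℝ (Fin n)) (s : ℝ) (m : ℕ)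
    (x : EuclideanSpace ℝ (Fin n)) :
    HasFDerivAt (fun x => wt x₀ s x ^ (m + 2))
      ((((m : ℝ) + 2) * wt x₀ s x ^ (m + 1)) •
        (-(2 • innerSL ℝ (x - x₀)) : EuclideanSpace ℝ (Fin n) →L[ℝ] ℝ)) x := by
  have h1 : HasFDerivAt (fun x : EuclideanSpace ℝ (Fin n) => s - ‖x - x₀‖ ^ 2)
      (-(2 • innerSL ℝ (x - x₀))) x := by
    have := (((hasFDerivAt_id x).sub_const x₀).norm_sq).const_sub s
    simpa using this
  exact (hasDerivAt_posPow m (s - ‖x - x₀‖ ^ 2)).comp_hasFDerivAt x h1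

lemma wt_fderiv {n : ℕ} (x₀ : EuclideanSpace ℝ (Fin n)) (s : ℝ) (m : ℕ)
    (x : EuclideanSpace ℝ (Fin n)) (j : Fin n) :
    fderiv ℝ (fun x => wt x₀ s x ^ (m + 2)) x (EuclideanSpace.single j 1) =
      -(2 * ((m : ℝ) + 2) * (x j - x₀ j) * wt x₀ s x ^ (m + 1)) := by
  rw [(wt_hasFDerivAt x₀ s m x).fderiv]
  simp [EuclideanSpace.inner_single_right]
  ring

lemma integrable_wt {n : ℕ} {x₀ : EuclideanSpace ℝ (Fin n)} {R : ℝ}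
    {F : EuclideanSpace ℝ (Fin n) → ℝ} (hF : ContinuousOn F (Metric.closedBall x₀ R)) (s : ℝ)
    (m : ℕ) : IntegrableOn (fun x => F x * wt x₀ s x ^ m) (Metric.closedBall x₀ R) :=
  (hF.mul ((wt_continuous x₀ s).pow m).continuousOn).integrableOn_compact
    (isCompact_closedBall _ _)

lemma ibp {n : ℕ} {Ω : Set (EuclideanSpace ℝ (Fin n))} (hΩ : IsOpen Ω)
    {x₀ : EuclideanSpace ℝ (Fin n)} {R s : ℝ} (hR : 0 < R) (hs : s < R ^ 2)
    (hK : Metric.closedBall x₀ R ⊆ Ω) {X : EuclideanSpace ℝ (Fin n) → ℝ}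
    (hX : ContDiffOn ℝ 1 X Ω) (j : Fin n) (m : ℕ) :
    ∫ x in Metric.closedBall x₀ R, pderiv' j X x * wt x₀ s x ^ (m + 2) =
    ∫ x in Metric.closedBall x₀ R,
      (2 * ((m : ℝ) + 2) * (x j - x₀ j) * X x) * wt x₀ s x ^ (m + 1) := by
  have hXc : ContinuousOn X (Metric.closedBall x₀ R) := hX.continuousOn.mono hK
  have hXd : ContinuousOn (pderiv' j X) (Metric.closedBall x₀ R) := by
    have h1 : ContinuousOn (fderiv ℝ X) Ω := hX.continuousOn_fderiv_of_isOpen hΩ le_rfl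
    exact (h1.mono hK).clm_apply continuousOn_const
  have hz : ∀ x, x ∉ Metric.closedBall x₀ R → wt x₀ s x = 0 := wt_zero x₀ hR hs
  have i1 : IntegrableOn (fun x => pderiv' j X x * wt x₀ s x ^ (m + 2))
    (Metric.closedBall x₀ R) := integrable_wt hXd s _
  have i2 : IntegrableOn (fun x => (2 * ((m : ℝ) + 2) * (x j - x₀ j) * X x) * wt x₀ s x ^ (m + 1))
    (Metric.closedBall x₀ R) := integrable_wt (by fun_prop) s _
  have i3 := integrable_wt hXc s (m + 2)
  rw [setIntegral_eq_integral_of_forall_compl_eq_zero (fun x hx => by simp [hz x hx]),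
    setIntegral_eq_integral_of_forall_compl_eq_zero (fun x hx => by simp [hz x hx])]
  rw [integrableOn_iff_integrable_of_support_subset] at i1 i2 i3
  · have key := integral_mul_fderiv_eq_neg_fderiv_mul_of_integrable (μ := volume)
      (f := fun x => wt x₀ s x ^ (m + 2)) (g := X)
      (v := (EuclideanSpace.single j 1 : EuclideanSpace ℝ (Fin n))) ?_ ?_ ?_ ?_ ?_
    · simp only [wt_fderiv] at key
      rw [← integral_neg] at key
      calc _ = _ := by
            apply integral_congr_ae; filter_upwards with x; exact mul_comm _ _
        _ = _ := key
        _ = _ := by apply integral_congr_ae; filter_upwards with x; ring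
    · simp only [wt_fderiv]
      refine i2.neg.congr ?_
      filter_upwards with x; simp only [Pi.neg_apply]; ring
    · refine i1.congr ?_
      filter_upwards with x; exact mul_comm _ _
    · refine i3.congr ?_
      filter_upwards with x; exact mul_comm _ _
    · intro x _; exact (wt_hasFDerivAt x₀ s m x).differentiableAt
    · intro x hx
      have : x ∈ Metric.closedBall x₀ R := by
        refine closure_minimal ?_ Metric.isClosed_closedBall hx
        intro y hy
        by_contra hc
        exact hy (by simp [hz y hc])
      exact (hX.contDiffAt (hΩ.mem_nhds (hK this))).differentiableAt (by norm_num)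
  all_goals
    intro y hy
    by_contra hc
    exact hy (by simp [hz y hc])

lemma deriv_wt {n : ℕ} {x₀ : EuclideanSpace ℝ (Fin n)} {R : ℝ}
    {F : EuclideanSpace ℝ (Fin n) → ℝ} (hF : ContinuousOn F (Metric.closedBall x₀ R)) (s : ℝ)
    (m : ℕ) :
    HasDerivAt (fun s => ∫ x in Metric.closedBall x₀ R, F x * wt x₀ s x ^ (m + 2))
      (((m : ℝ) + 2) * ∫ x in Metric.closedBall x₀ R, F x * wt x₀ s x ^ (m + 1)) s := by
  rw [← integral_const_mul]
  have hFi : IntegrableOn F (Metric.closedBall x₀ R) :=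
    hF.integrableOn_compact (isCompact_closedBall _ _)
  refine (hasDerivAt_integral_of_dominated_loc_of_deriv_le
    (F' := fun s x => ((m : ℝ) + 2) * (F x * wt x₀ s x ^ (m + 1)))
    (bound := fun x => ((m : ℝ) + 2) * (‖F x‖ * (|s| + 1) ^ (m + 1)))
    (Metric.ball_mem_nhds s one_pos) ?_ ?_ ?_ ?_ ?_ ?_).2
  · filter_upwards with t
    exact (integrable_wt hF t _).aestronglyMeasurable
  · exact integrable_wt hF s _
  · exact ((integrable_wt hF s (m + 1)).const_mul _).aestronglyMeasurable
  · filter_upwards with x t ht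
    have ht' : t ≤ |s| + 1 := by
      rw [Metric.mem_ball, Real.dist_eq] at ht
      have := (abs_lt.1 ht).2
      linarith [le_abs_self s]
    have h1 : wt x₀ t x ≤ |s| + 1 :=
      max_le (by linarith [sq_nonneg ‖x - x₀‖]) (by positivity)
    have h0 := wt_nonneg x₀ t x
    rw [norm_mul, norm_mul, Real.norm_of_nonneg (show (0 : ℝ) ≤ m + 2 by positivity),
      Real.norm_of_nonneg (pow_nonneg h0 _)]
    gcongr
  · exact (hFi.norm.mul_const _).const_mul _
  · filter_upwards with x t _
    have h1 : HasDerivAt (fun t : ℝ => t - ‖x - x₀‖ ^ 2) 1 t := (hasDerivAt_id t).sub_const _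
    have h2 := ((hasDerivAt_posPow m (t - ‖x - x₀‖ ^ 2)).comp t h1).const_mul (F x)
    refine h2.congr_deriv ?_
    simp only [wt]; ring

lemma pd_mul {n : ℕ} {f g : EuclideanSpace ℝ (Fin n) → ℝ} {x : EuclideanSpace ℝ (Fin n)}
    (j : Fin n) (hf : DifferentiableAt ℝ f x) (hg : DifferentiableAt ℝ g x) :
    pderiv' j (fun x => f x * g x) x = pderiv' j f x * g x + f x * pderiv' j g x := by
  unfold pderiv'
  rw [(hf.hasFDerivAt.fun_mul hg.hasFDerivAt).fderiv]
  simp; ring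

lemma pd_sub {n : ℕ} {f g : EuclideanSpace ℝ (Fin n) → ℝ} {x : EuclideanSpace ℝ (Fin n)}
    (j : Fin n) (hf : DifferentiableAt ℝ f x) (hg : DifferentiableAt ℝ g x) :
    pderiv' j (fun x => f x - g x) x = pderiv' j f x - pderiv' j g x := by
  unfold pderiv'
  rw [(hf.hasFDerivAt.fun_sub hg.hasFDerivAt).fderiv]
  simp

lemma pd_const_mul {n : ℕ} {f : EuclideanSpace ℝ (Fin n) → ℝ} {x : EuclideanSpace ℝ (Fin n)}
    (j : Fin n) (c : ℝ) (hf : DifferentiableAt ℝ f x) :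
    pderiv' j (fun x => c * f x) x = c * pderiv' j f x := by
  unfold pderiv'
  rw [(hf.hasFDerivAt.const_mul c).fderiv]
  simp

lemma pd_sum {n : ℕ} {f : Fin n → EuclideanSpace ℝ (Fin n) → ℝ} {x : EuclideanSpace ℝ (Fin n)}
    (j : Fin n) (hf : ∀ i, DifferentiableAt ℝ (f i) x) :
    pderiv' j (fun x => ∑ i, f i x) x = ∑ i, pderiv' j (f i) x := by
  unfold pderiv'
  rw [(HasFDerivAt.fun_sum (fun i _ => (hf i).hasFDerivAt)).fderiv]
  simp

lemma pd_coord {n : ℕ} (x₀ x : EuclideanSpace ℝ (Fin n)) (i j : Fin n) :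
    pderiv' j (fun x => x i - x₀ i) x = if i = j then 1 else 0 := by
  unfold pderiv'
  have h : HasFDerivAt (fun x : EuclideanSpace ℝ (Fin n) => x i - x₀ i)
      (EuclideanSpace.proj i : EuclideanSpace ℝ (Fin n) →L[ℝ] ℝ) x :=
    (EuclideanSpace.proj i : EuclideanSpace ℝ (Fin n) →L[ℝ] ℝ).hasFDerivAt.sub_const _
  rw [h.fderiv]
  simp

lemma contDiffOn_pderiv {n : ℕ} {Ω : Set (EuclideanSpace ℝ (Fin n))} (hΩ : IsOpen Ω)
    {u : EuclideanSpace ℝ (Fin n) → ℝ} (hu : ContDiffOn ℝ 2 u Ω) (j : Fin n) :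
    ContDiffOn ℝ 1 (pderiv' j u) Ω := by
  have h1 : ContDiffOn ℝ 1 (fderiv ℝ u) Ω := hu.fderiv_of_isOpen hΩ (by norm_num)
  exact h1.clm_apply contDiffOn_const

lemma continuousOn_pderiv {n : ℕ} {Ω : Set (EuclideanSpace ℝ (Fin n))} (hΩ : IsOpen Ω)
    {u : EuclideanSpace ℝ (Fin n) → ℝ} (hu : ContDiffOn ℝ 1 u Ω) (j : Fin n) :
    ContinuousOn (pderiv' j u) Ω :=
  (hu.continuousOn_fderiv_of_isOpen hΩ le_rfl).clm_apply continuousOn_const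

lemma pderiv_symm {n : ℕ} {Ω : Set (EuclideanSpace ℝ (Fin n))} (hΩ : IsOpen Ω)
    {u : EuclideanSpace ℝ (Fin n) → ℝ} (hu : ContDiffOn ℝ 2 u Ω) (i j : Fin n)
    {x : EuclideanSpace ℝ (Fin n)} (hx : x ∈ Ω) :
    pderiv' i (pderiv' j u) x = pderiv' j (pderiv' i u) x := by
  have hc : ContDiffAt ℝ 2 u x := hu.contDiffAt (hΩ.mem_nhds hx)
  have hs : IsSymmSndFDerivAt ℝ u x := hc.isSymmSndFDerivAt (by simp)
  have hd : DifferentiableAt ℝ (fderiv ℝ u) x :=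
    (hc.fderiv_right (m := 1) (by norm_num)).differentiableAt (by norm_num)
  have key : ∀ i j : Fin n, pderiv' i (pderiv' j u) x =
      fderiv ℝ (fderiv ℝ u) x (EuclideanSpace.single i 1) (EuclideanSpace.single j 1) := by
    intro i j
    unfold pderiv'
    rw [(hd.hasFDerivAt.clm_apply (hasFDerivAt_const _ x)).fderiv]
    simp
  rw [key, key]
  exact hs _ _

/-- weighted integral -/
noncomputable def WI {n : ℕ} (x₀ : EuclideanSpace ℝ (Fin n)) (R : ℝ)
    (F : EuclideanSpace ℝ (Fin n) → ℝ) (m : ℕ) (s : ℝ) : ℝ :=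
  ∫ x in Metric.closedBall x₀ R, F x * wt x₀ s x ^ m

lemma WI_congr {n : ℕ} {x₀ : EuclideanSpace ℝ (Fin n)} {R : ℝ}
    {F G : EuclideanSpace ℝ (Fin n) → ℝ} (h : ∀ x ∈ Metric.closedBall x₀ R, F x = G x) (m : ℕ)
    (s : ℝ) : WI x₀ R F m s = WI x₀ R G m s := by
  apply setIntegral_congr_fun Metric.isClosed_closedBall.measurableSet
  intro x hx
  simp only [h x hx]

lemma WI_add {n : ℕ} {x₀ : EuclideanSpace ℝ (Fin n)} {R : ℝ}
    {F G : EuclideanSpace ℝ (Fin n) → ℝ} (hF : ContinuousOn F (Metric.closedBall x₀ R))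
    (hG : ContinuousOn G (Metric.closedBall x₀ R)) (m : ℕ) (s : ℝ) :
    WI x₀ R (fun x => F x + G x) m s = WI x₀ R F m s + WI x₀ R G m s := by
  unfold WI
  rw [← integral_add (integrable_wt hF s m) (integrable_wt hG s m)]
  simp only [add_mul]

lemma WI_smul {n : ℕ} {x₀ : EuclideanSpace ℝ (Fin n)} {R : ℝ}
    {F : EuclideanSpace ℝ (Fin n) → ℝ} (c : ℝ) (m : ℕ) (s : ℝ) :
    WI x₀ R (fun x => c * F x) m s = c * WI x₀ R F m s := by
  unfold WI
  rw [← integral_const_mul]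
  simp only [mul_assoc]

lemma WI_mono {n : ℕ} {x₀ : EuclideanSpace ℝ (Fin n)} {R : ℝ}
    {F G : EuclideanSpace ℝ (Fin n) → ℝ} (hF : ContinuousOn F (Metric.closedBall x₀ R))
    (hG : ContinuousOn G (Metric.closedBall x₀ R)) (m : ℕ) (s : ℝ)
    (h : ∀ x ∈ Metric.closedBall x₀ R, F x ≤ G x) :
    WI x₀ R F m s ≤ WI x₀ R G m s := by
  apply setIntegral_mono_on (integrable_wt hF s m) (integrable_wt hG s m)
    Metric.isClosed_closedBall.measurableSet
  intro x hx
  exact mul_le_mul_of_nonneg_right (h x hx) (pow_nonneg (wt_nonneg _ _ _) _)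

lemma WI_succ_le {n : ℕ} {x₀ : EuclideanSpace ℝ (Fin n)} {R : ℝ}
    {F : EuclideanSpace ℝ (Fin n) → ℝ} (hF : ContinuousOn F (Metric.closedBall x₀ R))
    (m : ℕ) {s : ℝ} (hs : 0 ≤ s)
    (h : ∀ x ∈ Metric.closedBall x₀ R, 0 ≤ F x) :
    WI x₀ R F (m + 1) s ≤ s * WI x₀ R F m s := by
  unfold WI
  rw [← integral_const_mul]
  apply setIntegral_mono_on (integrable_wt hF s _) ((integrable_wt hF s m).const_mul s)
    Metric.isClosed_closedBall.measurableSet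
  intro x hx
  have := mul_le_mul_of_nonneg_left (wt_le x₀ hs x)
    (mul_nonneg (h x hx) (pow_nonneg (wt_nonneg x₀ s x) m))
  rw [pow_succ]; linarith

lemma WI_nonneg {n : ℕ} {x₀ : EuclideanSpace ℝ (Fin n)} {R : ℝ}
    {F : EuclideanSpace ℝ (Fin n) → ℝ}
    (m : ℕ) (s : ℝ)
    (h : ∀ x ∈ Metric.closedBall x₀ R, 0 ≤ F x) :
    0 ≤ WI x₀ R F m s := by
  apply setIntegral_nonneg Metric.isClosed_closedBall.measurableSet
  intro x hx
  exact mul_nonneg (h x hx) (pow_nonneg (wt_nonneg _ _ _) _)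

lemma WI_normsq {n : ℕ} {x₀ : EuclideanSpace ℝ (Fin n)} {R : ℝ}
    {F : EuclideanSpace ℝ (Fin n) → ℝ} (hF : ContinuousOn F (Metric.closedBall x₀ R))
    (m : ℕ) (s : ℝ) :
    WI x₀ R (fun x => ‖x - x₀‖ ^ 2 * F x) (m + 1) s =
      s * WI x₀ R F (m + 1) s - WI x₀ R F (m + 2) s := by
  unfold WI
  rw [← integral_const_mul, ← integral_sub ((integrable_wt hF s _).const_mul s)
    (integrable_wt hF s _)]
  congr 1
  ext x
  have : (s - ‖x - x₀‖ ^ 2 - wt x₀ s x) * wt x₀ s x = 0 := by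
    unfold wt
    rcases le_total (s - ‖x - x₀‖ ^ 2) 0 with h | h
    · rw [max_eq_right h]; simp
    · rw [max_eq_left h]; simp
  have h2 : (s - ‖x - x₀‖ ^ 2 - wt x₀ s x) * wt x₀ s x * (wt x₀ s x ^ m * F x) = 0 := by
    rw [this]; simp
  rw [pow_succ, show m + 2 = (m + 1) + 1 from rfl, pow_succ _ (m + 1), pow_succ]
  linarith

lemma WI_deriv {n : ℕ} {x₀ : EuclideanSpace ℝ (Fin n)} {R : ℝ}
    {F : EuclideanSpace ℝ (Fin n) → ℝ} (hF : ContinuousOn F (Metric.closedBall x₀ R)) (s : ℝ)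
    (m : ℕ) :
    HasDerivAt (WI x₀ R F (m + 2)) (((m : ℝ) + 2) * WI x₀ R F (m + 1) s) s := deriv_wt hF s m

lemma ibp_div {n : ℕ} {Ω : Set (EuclideanSpace ℝ (Fin n))} (hΩ : IsOpen Ω)
    {x₀ : EuclideanSpace ℝ (Fin n)} {R s : ℝ} (hR : 0 < R) (hs : s < R ^ 2)
    (hK : Metric.closedBall x₀ R ⊆ Ω) {X : Fin n → EuclideanSpace ℝ (Fin n) → ℝ}
    (hX : ∀ j, ContDiffOn ℝ 1 (X j) Ω) (m : ℕ) {D B : EuclideanSpace ℝ (Fin n) → ℝ}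
    (hD : ∀ x ∈ Metric.closedBall x₀ R, ∑ j, pderiv' j (X j) x = D x)
    (hB : ∀ x ∈ Metric.closedBall x₀ R, ∑ j, (x j - x₀ j) * X j x = B x) :
    WI x₀ R D (m + 2) s = 2 * ((m : ℝ) + 2) * WI x₀ R B (m + 1) s := by
  rw [← WI_congr hD, ← WI_congr hB, ← WI_smul]
  unfold WI
  have hXc : ∀ j, ContinuousOn (X j) (Metric.closedBall x₀ R) :=
    fun j => (hX j).continuousOn.mono hK
  have hXd : ∀ j, ContinuousOn (pderiv' j (X j)) (Metric.closedBall x₀ R) :=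
    fun j => (continuousOn_pderiv hΩ (hX j) j).mono hK
  simp only [Finset.mul_sum, Finset.sum_mul]
  rw [integral_finsetSum _ (fun j _ => integrable_wt (hXd j) s _), integral_finsetSum]
  · refine Finset.sum_congr rfl fun j _ => ?_
    rw [ibp hΩ hR hs hK (hX j) j m]
    congr 1; ext x; ring
  · intro j _
    exact integrable_wt (F := fun x => 2 * ((m : ℝ) + 2) * ((x j - x₀ j) * X j x))
      (by have := hXc j; fun_prop) s _

/-- radial derivative -/
noncomputable def zf {n : ℕ} (x₀ : EuclideanSpace ℝ (Fin n)) (u : EuclideanSpace ℝ (Fin n) → ℝ)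
    (x : EuclideanSpace ℝ (Fin n)) : ℝ := ∑ i, (x i - x₀ i) * pderiv' i u x

/-- energy density -/
noncomputable def ef {n : ℕ} (u p : EuclideanSpace ℝ (Fin n) → ℝ)
    (x : EuclideanSpace ℝ (Fin n)) : ℝ := ∑ i, pderiv' i u x * pderiv' i u x - p x * (u x * u x)

/-- right-hand side -/
noncomputable def ff {n : ℕ} (u p : EuclideanSpace ℝ (Fin n) → ℝ)
    (x : EuclideanSpace ℝ (Fin n)) : ℝ := lap u x + p x * u x

lemma contDiffOn_coord {n : ℕ} (Ω : Set (EuclideanSpace ℝ (Fin n)))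
    (x₀ : EuclideanSpace ℝ (Fin n)) (j : Fin n) :
    ContDiffOn ℝ 1 (fun x : EuclideanSpace ℝ (Fin n) => x j - x₀ j) Ω := by
  have : ContDiff ℝ 1 (fun x : EuclideanSpace ℝ (Fin n) => x j - x₀ j) := by fun_prop
  exact this.contDiffOn

lemma zf_contDiffOn {n : ℕ} {Ω : Set (EuclideanSpace ℝ (Fin n))} (hΩ : IsOpen Ω)
    (x₀ : EuclideanSpace ℝ (Fin n))
    {u : EuclideanSpace ℝ (Fin n) → ℝ} (hu : ContDiffOn ℝ 2 u Ω) :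
    ContDiffOn ℝ 1 (zf x₀ u) Ω :=
  ContDiffOn.sum fun i _ => (contDiffOn_coord Ω x₀ i).mul (contDiffOn_pderiv hΩ hu i)

lemma zf_continuousOn {n : ℕ} {Ω : Set (EuclideanSpace ℝ (Fin n))} (hΩ : IsOpen Ω)
    (x₀ : EuclideanSpace ℝ (Fin n))
    {u : EuclideanSpace ℝ (Fin n) → ℝ} (hu : ContDiffOn ℝ 1 u Ω) :
    ContinuousOn (zf x₀ u) Ω :=
  continuousOn_finsetSum _ fun i _ =>
    (contDiffOn_coord Ω x₀ i).continuousOn.mul (continuousOn_pderiv hΩ hu i)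

lemma ef_contDiffOn {n : ℕ} {Ω : Set (EuclideanSpace ℝ (Fin n))} (hΩ : IsOpen Ω)
    {u p : EuclideanSpace ℝ (Fin n) → ℝ} (hu : ContDiffOn ℝ 2 u Ω) (hp : ContDiffOn ℝ 1 p Ω) :
    ContDiffOn ℝ 1 (ef u p) Ω :=
  (ContDiffOn.sum fun i _ => (contDiffOn_pderiv hΩ hu i).mul (contDiffOn_pderiv hΩ hu i)).sub
    (hp.mul ((hu.of_le (by norm_num)).mul (hu.of_le (by norm_num))))

lemma ff_continuousOn {n : ℕ} {Ω : Set (EuclideanSpace ℝ (Fin n))} (hΩ : IsOpen Ω)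
    {u p : EuclideanSpace ℝ (Fin n) → ℝ} (hu : ContDiffOn ℝ 2 u Ω) (hp : ContDiffOn ℝ 1 p Ω) :
    ContinuousOn (ff u p) Ω :=
  (continuousOn_finsetSum _ fun i _ => continuousOn_pderiv hΩ (contDiffOn_pderiv hΩ hu i) i).add
    (hp.continuousOn.mul hu.continuousOn)

lemma identity1 {n : ℕ} {Ω : Set (EuclideanSpace ℝ (Fin n))} (hΩ : IsOpen Ω)
    {x₀ : EuclideanSpace ℝ (Fin n)} {R s : ℝ} (hR : 0 < R) (hs : s < R ^ 2)
    (hK : Metric.closedBall x₀ R ⊆ Ω) {u : EuclideanSpace ℝ (Fin n) → ℝ}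
    (hu : ContDiffOn ℝ 2 u Ω) (m : ℕ) :
    2 * s * (((m : ℝ) + 2) * WI x₀ R (fun x => u x * u x) (m + 1) s) =
      (2 * ((m : ℝ) + 2) + n) * WI x₀ R (fun x => u x * u x) (m + 2) s +
      2 * WI x₀ R (fun x => u x * zf x₀ u x) (m + 2) s := by
  have hu1 : ContDiffOn ℝ 1 u Ω := hu.of_le (by norm_num)
  have huc := hu1.continuousOn.mono hK
  have hzc := (zf_continuousOn hΩ x₀ hu1).mono hK
  have key := ibp_div hΩ hR hs hK (X := fun j x => (x j - x₀ j) * (u x * u x))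
    (D := fun x => n * (u x * u x) + 2 * (u x * zf x₀ u x))
    (B := fun x => ‖x - x₀‖ ^ 2 * (u x * u x))
    (fun j => (contDiffOn_coord Ω x₀ j).mul (hu1.mul hu1)) m ?_ ?_
  · rw [WI_normsq (huc.fun_mul huc), WI_add (by fun_prop) (by fun_prop), WI_smul, WI_smul] at key
    linarith
  · intro x hx
    have hd : DifferentiableAt ℝ u x :=
      (hu1.contDiffAt (hΩ.mem_nhds (hK hx))).differentiableAt (by norm_num)
    have : ∀ j, pderiv' j (fun x => (x j - x₀ j) * (u x * u x)) x =
        u x * u x + 2 * (u x * ((x j - x₀ j) * pderiv' j u x)) := by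
      intro j
      rw [pd_mul j (by fun_prop) (by fun_prop), pd_mul j hd hd, pd_coord]
      simp; ring
    simp only [this, Finset.sum_add_distrib, zf, Finset.mul_sum]
    simp
  · intro x hx
    rw [EuclideanSpace.real_norm_sq_eq, Finset.sum_mul]
    refine Finset.sum_congr rfl fun j _ => ?_
    simp; ring

lemma identity2 {n : ℕ} {Ω : Set (EuclideanSpace ℝ (Fin n))} (hΩ : IsOpen Ω)
    {x₀ : EuclideanSpace ℝ (Fin n)} {R s : ℝ} (hR : 0 < R) (hs : s < R ^ 2)
    (hK : Metric.closedBall x₀ R ⊆ Ω) {u p : EuclideanSpace ℝ (Fin n) → ℝ}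
    (hu : ContDiffOn ℝ 2 u Ω) (hp : ContDiffOn ℝ 1 p Ω) (m : ℕ) :
    WI x₀ R (ef u p) (m + 3) s + WI x₀ R (fun x => u x * ff u p x) (m + 3) s =
      2 * ((m : ℝ) + 3) * WI x₀ R (fun x => u x * zf x₀ u x) (m + 2) s := by
  have hu1 : ContDiffOn ℝ 1 u Ω := hu.of_le (by norm_num)
  have huc := hu1.continuousOn.mono hK
  have hec := (ef_contDiffOn hΩ hu hp).continuousOn.mono hK
  have hfc := (ff_continuousOn hΩ hu hp).mono hK
  have key := ibp_div hΩ hR hs hK (X := fun j x => u x * pderiv' j u x)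
    (D := fun x => ef u p x + u x * ff u p x)
    (B := fun x => u x * zf x₀ u x)
    (fun j => hu1.mul (contDiffOn_pderiv hΩ hu j)) (m + 1) ?_ ?_
  · rw [WI_add hec (huc.fun_mul hfc)] at key
    rw [show m + 3 = m + 1 + 2 from rfl, key]
    push_cast; ring
  · intro x hx
    have hd : DifferentiableAt ℝ u x :=
      (hu1.contDiffAt (hΩ.mem_nhds (hK hx))).differentiableAt (by norm_num)
    have hdd : ∀ j, DifferentiableAt ℝ (pderiv' j u) x := fun j =>
      ((contDiffOn_pderiv hΩ hu j).contDiffAt (hΩ.mem_nhds (hK hx))).differentiableAt (by norm_num)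
    simp only [fun j => pd_mul j hd (hdd j), Finset.sum_add_distrib, ef, ff, lap, mul_add,
      Finset.mul_sum]
    ring
  · intro x hx
    simp only [zf, Finset.mul_sum]
    refine Finset.sum_congr rfl fun j _ => ?_
    ring

lemma identity3 {n : ℕ} {Ω : Set (EuclideanSpace ℝ (Fin n))} (hΩ : IsOpen Ω)
    {x₀ : EuclideanSpace ℝ (Fin n)} {R s : ℝ} (hR : 0 < R) (hs : s < R ^ 2)
    (hK : Metric.closedBall x₀ R ⊆ Ω) {u p : EuclideanSpace ℝ (Fin n) → ℝ}
    (hu : ContDiffOn ℝ 2 u Ω) (hp : ContDiffOn ℝ 1 p Ω) (m : ℕ) :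
    2 * s * (((m : ℝ) + 3) * WI x₀ R (ef u p) (m + 2) s) =
      (2 * ((m : ℝ) + 2) + n) * WI x₀ R (ef u p) (m + 3) s +
      4 * ((m : ℝ) + 3) * WI x₀ R (fun x => zf x₀ u x * zf x₀ u x) (m + 2) s
      - WI x₀ R (fun x => (zf x₀ p x + 2 * p x) * (u x * u x)) (m + 3) s
      - 2 * WI x₀ R (fun x => ff u p x * zf x₀ u x) (m + 3) s := by
  have hu1 : ContDiffOn ℝ 1 u Ω := hu.of_le (by norm_num)
  have huc := hu1.continuousOn.mono hK
  have hpc := hp.continuousOn.mono hK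
  have he := ef_contDiffOn hΩ hu hp
  have hz := zf_contDiffOn hΩ x₀ hu
  have hec := he.continuousOn.mono hK
  have hzc := hz.continuousOn.mono hK
  have hzpc := (zf_continuousOn hΩ x₀ hp).mono hK
  have hfc := (ff_continuousOn hΩ hu hp).mono hK
  have key := ibp_div hΩ hR hs hK
    (X := fun j x => (x j - x₀ j) * ef u p x - 2 * (zf x₀ u x * pderiv' j u x))
    (D := fun x => ((n : ℝ) - 2) * ef u p x + ((-1) * ((zf x₀ p x + 2 * p x) * (u x * u x)) +
      (-2) * (ff u p x * zf x₀ u x)))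
    (B := fun x => ‖x - x₀‖ ^ 2 * ef u p x + (-2) * (zf x₀ u x * zf x₀ u x))
    (fun j => ((contDiffOn_coord Ω x₀ j).mul he).sub
      (contDiffOn_const.mul (hz.mul (contDiffOn_pderiv hΩ hu j)))) (m + 1) ?_ ?_
  · rw [WI_add (by fun_prop) (by fun_prop), WI_add (by fun_prop) (by fun_prop),
      WI_add (by fun_prop) (by fun_prop), WI_smul, WI_smul, WI_smul, WI_smul, WI_normsq hec] at key
    simp only [show m + 1 + 2 = m + 3 from rfl, show m + 1 + 1 = m + 2 from rfl] at key
    push_cast at key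
    linear_combination (-1 : ℝ) * key
  · intro x hx
    have hxΩ := hΩ.mem_nhds (hK hx)
    have hd : DifferentiableAt ℝ u x :=
      (hu1.contDiffAt hxΩ).differentiableAt (by norm_num)
    have hpd : DifferentiableAt ℝ p x :=
      (hp.contDiffAt hxΩ).differentiableAt (by norm_num)
    have hed : DifferentiableAt ℝ (ef u p) x :=
      (he.contDiffAt hxΩ).differentiableAt (by norm_num)
    have hzd : DifferentiableAt ℝ (zf x₀ u) x :=
      (hz.contDiffAt hxΩ).differentiableAt (by norm_num)
    have hdd : ∀ j, DifferentiableAt ℝ (pderiv' j u) x := fun j =>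
      ((contDiffOn_pderiv hΩ hu j).contDiffAt hxΩ).differentiableAt (by norm_num)
    have hde : ∀ j, pderiv' j (ef u p) x = ∑ i, 2 * (pderiv' i u x * pderiv' j (pderiv' i u) x)
        - pderiv' j p x * (u x * u x) - 2 * p x * u x * pderiv' j u x := by
      intro j
      unfold ef
      rw [pd_sub j (DifferentiableAt.fun_sum fun i _ => (hdd i).fun_mul (hdd i)) (by fun_prop),
        pd_sum j (fun i => (hdd i).fun_mul (hdd i)), pd_mul j hpd (by fun_prop), pd_mul j hd hd]
      rw [Finset.sum_congr rfl fun i _ => (pd_mul j (hdd i) (hdd i)).trans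
        (show _ = 2 * (pderiv' i u x * pderiv' j (pderiv' i u) x) by ring)]
      ring
    have hdz : ∀ j, pderiv' j (zf x₀ u) x = pderiv' j u x +
        ∑ i, (x i - x₀ i) * pderiv' j (pderiv' i u) x := by
      intro j
      unfold zf
      rw [pd_sum j (fun i => DifferentiableAt.fun_mul (by fun_prop) (hdd i))]
      rw [Finset.sum_congr rfl fun i _ => (pd_mul j (by fun_prop) (hdd i))]
      simp only [pd_coord, Finset.sum_add_distrib]
      simp
    have hj : ∀ j, pderiv' j (fun x => (x j - x₀ j) * ef u p x -
        2 * (zf x₀ u x * pderiv' j u x)) x =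
        ef u p x + (∑ i, 2 * ((x j - x₀ j) * pderiv' i u x * pderiv' j (pderiv' i u) x)
        - (x j - x₀ j) * pderiv' j p x * (u x * u x)
        - 2 * p x * u x * ((x j - x₀ j) * pderiv' j u x))
        - (2 * (pderiv' j u x * pderiv' j u x)
        + ∑ i, 2 * ((x i - x₀ i) * pderiv' j u x * pderiv' i (pderiv' j u) x))
        - 2 * zf x₀ u x * pderiv' j (pderiv' j u) x := by
      intro j
      rw [pd_sub j (DifferentiableAt.fun_mul (by fun_prop) hed)
        ((hzd.fun_mul (hdd j)).const_mul 2), pd_mul j (by fun_prop) hed,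
        pd_const_mul j _ (hzd.fun_mul (hdd j)), pd_mul j hzd (hdd j), pd_coord, hde, hdz]
      have e1 : ∑ i, 2 * ((x i - x₀ i) * pderiv' j u x * pderiv' i (pderiv' j u) x) =
          2 * pderiv' j u x * ∑ i, (x i - x₀ i) * pderiv' j (pderiv' i u) x := by
        rw [Finset.mul_sum]
        refine Finset.sum_congr rfl fun i _ => ?_
        rw [pderiv_symm hΩ hu i j (hK hx)]; ring
      have e2 : ∑ i, 2 * ((x j - x₀ j) * pderiv' i u x * pderiv' j (pderiv' i u) x) =
          (x j - x₀ j) * ∑ i, 2 * (pderiv' i u x * pderiv' j (pderiv' i u) x) := by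
        rw [Finset.mul_sum]
        refine Finset.sum_congr rfl fun i _ => ?_
        ring
      rw [e1, e2]
      simp only [if_true]
      ring
    simp only [hj, Finset.sum_add_distrib, Finset.sum_sub_distrib]
    rw [Finset.sum_comm (f := fun j i =>
      2 * ((x i - x₀ i) * pderiv' j u x * pderiv' i (pderiv' j u) x))]
    simp only [← Finset.mul_sum, ← Finset.sum_mul]
    simp only [ff, lap, Finset.sum_const, Finset.card_univ, Fintype.card_fin, nsmul_eq_mul]
    rw [show ∑ i, (x i - x₀ i) * pderiv' i u x = zf x₀ u x from rfl,
      show ∑ i, (x i - x₀ i) * pderiv' i p x = zf x₀ p x from rfl,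
      show ∑ i, pderiv' i u x * pderiv' i u x = ef u p x + p x * (u x * u x) by
        unfold ef; ring]
    ring
  · intro x hx
    rw [EuclideanSpace.real_norm_sq_eq]
    have : ∀ j, (x j - x₀ j) * ((x j - x₀ j) * ef u p x - 2 * (zf x₀ u x * pderiv' j u x)) =
      (x j - x₀ j) ^ 2 * ef u p x - 2 * zf x₀ u x * ((x j - x₀ j) * pderiv' j u x) := by
      intro j; ring
    simp only [this, Finset.sum_sub_distrib, ← Finset.mul_sum, ← Finset.sum_mul]
    rw [show ∑ i, (x i - x₀ i) * pderiv' i u x = zf x₀ u x from rfl]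
    simp; ring

lemma ode_alg {A k h P J Z E : ℝ} (hA : 1 ≤ A) (hk : 1 ≤ k) (hh : 0 < h)
    (hJP : |J - P| ≤ A * h) (hJZ : J ^ 2 ≤ Z * h)
    (hE : -(A * k * h + A * √(Z * h)) ≤ E) (hP : -(A * k * h) ≤ P) :
    -(2 * A * (P / h + (4 * A + 1) * k)) ≤ ((Z + E) * h - P * J) / h ^ 2 := by
  rw [le_div_iff₀ (by positivity)]
  have e0 : -(2 * A * (P / h + (4 * A + 1) * k)) * h ^ 2 =
      -(2 * A * (P * h + (4 * A + 1) * k * h ^ 2)) := by field_simp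
  rw [e0]
  set S := √(Z * h) with hS
  have hS2 : S ^ 2 = Z * h := Real.sq_sqrt (le_trans (sq_nonneg J) hJZ)
  have hS0 : 0 ≤ S := Real.sqrt_nonneg _
  set j := |J| with hj
  have hj0 : 0 ≤ j := abs_nonneg _
  have hj2 : j ^ 2 = J ^ 2 := sq_abs J
  have hjS : j ≤ S := abs_le_of_sq_le_sq' (by nlinarith) hS0 |>.2
  have hPJ : P * J ≤ j ^ 2 + A * h * j := by
    have : (P - J) * J ≤ A * h * j := by
      calc (P - J) * J ≤ |(P - J) * J| := le_abs_self _
        _ = |J - P| * j := by rw [abs_mul, abs_sub_comm]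
        _ ≤ A * h * j := by gcongr
    nlinarith
  have hjP : j ≤ P + 2 * A * k * h + A * h := by
    have h1 : j ≤ |P| + A * h := by
      have : |J| ≤ |J - P| + |P| := by simpa using abs_add_le (J - P) P
      linarith
    have hAkh : 0 ≤ A * k * h := by positivity
    have h2 : |P| ≤ P + 2 * A * k * h := abs_le.2 ⟨by linarith, by linarith⟩
    linarith
  have hEh : -(A * k * h + A * S) * h ≤ E * h := by gcongr
  have hAh : 0 ≤ A * h := by positivity
  have hd : -(2 * A * j * h) - A ^ 2 * h ^ 2 ≤ (S + j) * (S - j - A * h) := by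
    by_cases hc : A * h ≤ S - j
    · have : 0 ≤ (S + j) * (S - j - A * h) := mul_nonneg (by linarith) (by linarith)
      have h3 : 0 ≤ A * j * h := by positivity
      nlinarith
    · push Not at hc
      have h1 : 0 ≤ (A * h - (S - j)) * (S - j) := mul_nonneg (by linarith) (by linarith)
      have h2 : 0 ≤ j * (S - j) := mul_nonneg hj0 (by linarith)
      nlinarith [sq_nonneg (S - j)]
  have h5 : A * h * j ≤ A * h * (P + 2 * A * k * h + A * h) := by gcongr
  have h6 : A ^ 2 * h ^ 2 ≤ A ^ 2 * h ^ 2 * k := le_mul_of_one_le_right (by positivity) hk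
  have h7 : 0 ≤ A ^ 2 * h ^ 2 * k := by positivity
  have h8 : 0 ≤ A * h ^ 2 * k := by positivity
  nlinarith

lemma ode {A k a b c : ℝ} (hA : 1 ≤ A) (hk : 1 ≤ k) (hab : a < b) (hbc : b < c)
    (h P J Z E : ℝ → ℝ)
    (hh : ∀ t ∈ Set.Icc a c, HasDerivAt h (J t) t)
    (hP : ∀ t ∈ Set.Icc a c, HasDerivAt P (Z t + E t) t)
    (hpos : ∀ t ∈ Set.Icc a c, 0 < h t)
    (hJP : ∀ t ∈ Set.Icc a c, |J t - P t| ≤ A * h t)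
    (hJZ : ∀ t ∈ Set.Icc a c, J t ^ 2 ≤ Z t * h t)
    (hE : ∀ t ∈ Set.Icc a c, -(A * k * h t + A * √(Z t * h t)) ≤ E t)
    (hPk : ∀ t ∈ Set.Icc a c, -(A * k * h t) ≤ P t) :
    log (h b) - log (h a) ≤ ((b - a) / (c - b) * exp (2 * A * (c - a))) *
      (log (h c) - log (h b) + (c - b) * ((5 * A + 1) * k)) := by
  set m : ℝ → ℝ := fun t => P t / h t + (4 * A + 1) * k with hm
  have hmd : ∀ t ∈ Set.Icc a c, HasDerivAt m (((Z t + E t) * h t - P t * J t) / h t ^ 2) t := by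
    intro t ht
    exact ((hP t ht).div (hh t ht) (hpos t ht).ne').add_const _
  set φ : ℝ → ℝ := fun t => exp (2 * A * t) * m t with hφ
  have hφd : ∀ t ∈ Set.Icc a c, HasDerivAt φ (exp (2 * A * t) * (2 * A) * m t +
      exp (2 * A * t) * (((Z t + E t) * h t - P t * J t) / h t ^ 2)) t := by
    intro t ht
    have h1 : HasDerivAt (fun t => exp (2 * A * t)) (exp (2 * A * t) * (2 * A)) t := by
      have := ((hasDerivAt_id t).const_mul (2 * A)).exp
      simpa using this
    exact h1.mul (hmd t ht)
  have hmono : MonotoneOn φ (Set.Icc a c) := by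
    apply monotoneOn_of_deriv_nonneg (convex_Icc a c)
    · exact fun t ht => (hφd t ht).continuousAt.continuousWithinAt
    · intro t ht
      rw [interior_Icc] at ht
      exact (hφd t (Set.Ioo_subset_Icc_self ht)).differentiableAt.differentiableWithinAt
    · intro t ht
      rw [interior_Icc] at ht
      have ht' := Set.Ioo_subset_Icc_self ht
      rw [(hφd t ht').deriv]
      have := ode_alg hA hk (hpos t ht') (hJP t ht') (hJZ t ht') (hE t ht') (hPk t ht')
      have h2 : 0 ≤ 2 * A * m t + ((Z t + E t) * h t - P t * J t) / h t ^ 2 := by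
        simp only [hm]; linarith
      have := mul_nonneg (exp_pos (2 * A * t)).le h2
      linarith
  have hld : ∀ t ∈ Set.Icc a c, HasDerivAt (fun t => log (h t)) (J t / h t) t :=
    fun t ht => (hh t ht).log (hpos t ht).ne'
  have hlc : ContinuousOn (fun t => log (h t)) (Set.Icc a c) :=
    fun t ht => (hld t ht).continuousAt.continuousWithinAt
  obtain ⟨x, hx, hx'⟩ := exists_hasDerivAt_eq_slope (fun t => log (h t)) (fun t => J t / h t) hab
    (hlc.mono (Set.Icc_subset_Icc_right hbc.le))
    (fun t ht => hld t ⟨ht.1.le, ht.2.le.trans hbc.le⟩)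
  obtain ⟨y, hy, hy'⟩ := exists_hasDerivAt_eq_slope (fun t => log (h t)) (fun t => J t / h t) hbc
    (hlc.mono (Set.Icc_subset_Icc_left hab.le))
    (fun t ht => hld t ⟨hab.le.trans ht.1.le, ht.2.le⟩)
  have hxI : x ∈ Set.Icc a c := ⟨hx.1.le, hx.2.le.trans hbc.le⟩
  have hyI : y ∈ Set.Icc a c := ⟨hab.le.trans hy.1.le, hy.2.le⟩
  have hAk : A ≤ A * k := le_mul_of_one_le_right (by linarith) hk
  have bnd : ∀ t ∈ Set.Icc a c, |J t / h t - P t / h t| ≤ A := by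
    intro t ht
    rw [← sub_div, abs_div, abs_of_pos (hpos t ht), div_le_iff₀ (hpos t ht)]
    exact hJP t ht
  have hxm : J x / h x ≤ m x := by
    have := (abs_le.1 (bnd x hxI)).2
    simp only [hm]; nlinarith
  have hym : m y ≤ J y / h y + (5 * A + 1) * k := by
    have := (abs_le.1 (bnd y hyI)).1
    simp only [hm]; nlinarith
  have hmy0 : 0 ≤ m y := by
    have : -(A * k) ≤ P y / h y := by
      rw [le_div_iff₀ (hpos y hyI)]; have := hPk y hyI; linarith
    simp only [hm]; nlinarith
  have hmxy : m x ≤ exp (2 * A * (c - a)) * m y := by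
    have h1 : φ x ≤ φ y := hmono hxI hyI (hx.2.le.trans hy.1.le)
    simp only [hφ] at h1
    have h2 : m x ≤ exp (2 * A * (y - x)) * m y := by
      have h3 := mul_le_mul_of_nonneg_left h1 (exp_pos (-(2 * A * x))).le
      rw [← mul_assoc, ← mul_assoc, ← exp_add, ← exp_add] at h3
      simp only [neg_add_cancel, exp_zero, one_mul] at h3
      rwa [show -(2 * A * x) + 2 * A * y = 2 * A * (y - x) by ring] at h3
    refine h2.trans ?_
    gcongr
    · exact hy.2.le
    · exact hx.1.le
  have hba : 0 < b - a := by linarith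
  have hcb : 0 < c - b := by linarith
  have e1 : log (h b) - log (h a) = (b - a) * (J x / h x) := by rw [hx']; field_simp
  have e2 : log (h c) - log (h b) = (c - b) * (J y / h y) := by rw [hy']; field_simp
  rw [e1, e2]
  calc (b - a) * (J x / h x) ≤ (b - a) * (exp (2 * A * (c - a)) * m y) := by
        gcongr; exact hxm.trans hmxy
    _ ≤ (b - a) * (exp (2 * A * (c - a)) * (J y / h y + (5 * A + 1) * k)) := by gcongr
    _ = _ := by field_simp

lemma WI_CS {n : ℕ} {x₀ : EuclideanSpace ℝ (Fin n)} {R : ℝ}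
    {F G : EuclideanSpace ℝ (Fin n) → ℝ} (hF : ContinuousOn F (Metric.closedBall x₀ R))
    (hG : ContinuousOn G (Metric.closedBall x₀ R)) (m : ℕ) (s : ℝ) :
    WI x₀ R (fun x => |F x * G x|) m s ^ 2 ≤
      WI x₀ R (fun x => G x * G x) m s * WI x₀ R (fun x => F x * F x) m s := by
  have hA : ContinuousOn (fun x => |F x * G x|) (Metric.closedBall x₀ R) := (hF.fun_mul hG).abs
  have hdisc := discrim_le_zero (a := WI x₀ R (fun x => F x * F x) m s)
    (b := -2 * WI x₀ R (fun x => |F x * G x|) m s) (c := WI x₀ R (fun x => G x * G x) m s) ?_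
  · unfold discrim at hdisc
    nlinarith
  · intro l
    have h0 : 0 ≤ WI x₀ R (fun x => (l * l) * (F x * F x) +
        ((-2 * l) * |F x * G x| + G x * G x)) m s := by
      apply WI_nonneg
      intro x _
      rw [abs_mul]
      have h1 := abs_mul_abs_self (F x)
      have h2 := abs_mul_abs_self (G x)
      nlinarith [sq_nonneg (l * |F x| - |G x|)]
    rw [WI_add (by fun_prop) (by fun_prop), WI_add (by fun_prop) (by fun_prop), WI_smul,
      WI_smul] at h0
    linarith

lemma WI_abs_le {n : ℕ} {x₀ : EuclideanSpace ℝ (Fin n)} {R : ℝ}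
    {F G : EuclideanSpace ℝ (Fin n) → ℝ} (hF : ContinuousOn F (Metric.closedBall x₀ R))
    (hG : ContinuousOn G (Metric.closedBall x₀ R)) (m : ℕ) (s : ℝ)
    (h : ∀ x ∈ Metric.closedBall x₀ R, |F x| ≤ G x) :
    |WI x₀ R F m s| ≤ WI x₀ R G m s := by
  rw [abs_le]
  constructor
  · have := WI_mono (F := fun x => (-1) * G x) (by fun_prop) hF m s
      (fun x hx => by linarith [(abs_le.1 (h x hx)).1])
    rw [WI_smul] at this
    linarith
  · exact WI_mono hF hG m s (fun x hx => (abs_le.1 (h x hx)).2)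

/-- The exponentially rescaled function. -/
noncomputable def rsc (c : ℝ) (F : ℝ → ℝ) (t : ℝ) : ℝ := exp (-(c * t)) * F (exp t)

lemma rsc_deriv {c : ℝ} {F G : ℝ → ℝ} {F' t : ℝ} (hF : HasDerivAt F F' (exp t))
    (h : exp t * F' = c * F (exp t) + G (exp t)) : HasDerivAt (rsc c F) (rsc c G t) t := by
  have h1 : HasDerivAt (fun t => exp (-(c * t))) (exp (-(c * t)) * (-c)) t := by
    have := ((hasDerivAt_id t).const_mul c).neg.exp
    simpa using this
  have h2 := h1.mul (hF.comp t (Real.hasDerivAt_exp t))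
  refine h2.congr_deriv ?_
  simp only [rsc, Function.comp]
  linear_combination exp (-(c * t)) * h

lemma bounds {n : ℕ} {Ω : Set (EuclideanSpace ℝ (Fin n))} (hΩ : IsOpen Ω)
    {x₀ : EuclideanSpace ℝ (Fin n)} {R s : ℝ} (hR : 0 < R) (hs0 : 0 < s) (hs : s < R ^ 2)
    (hK : Metric.closedBall x₀ R ⊆ Ω) {u p : EuclideanSpace ℝ (Fin n) → ℝ}
    (hu : ContDiffOn ℝ 2 u Ω) (hp : ContDiffOn ℝ 1 p Ω) (m : ℕ)
    {k B V A : ℝ} (hk : 1 ≤ k) (hkm : k ≤ (m : ℝ) + 3) (hB0 : 0 ≤ B) (hV0 : 0 ≤ V)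
    (hAB : R ^ 2 * B ≤ A) (hAV : R ^ 2 * V ≤ A)
    (hpB : ∀ x ∈ Metric.closedBall x₀ R, p x ≤ k ^ 2 * B)
    (hzB : ∀ x ∈ Metric.closedBall x₀ R, zf x₀ p x + 2 * p x ≤ k ^ 2 * B)
    (hf : ∀ x ∈ Metric.closedBall x₀ R, |ff u p x| ≤ V * |u x|) :
    |WI x₀ R (fun x => u x * zf x₀ u x) (m + 2) s - WI x₀ R (ef u p) (m + 3) s / (2 * (m + 3))|
      ≤ A * WI x₀ R (fun x => u x * u x) (m + 2) s ∧
    WI x₀ R (fun x => u x * zf x₀ u x) (m + 2) s ^ 2 ≤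
      WI x₀ R (fun x => zf x₀ u x * zf x₀ u x) (m + 2) s *
      WI x₀ R (fun x => u x * u x) (m + 2) s ∧
    -(A * k * WI x₀ R (fun x => u x * u x) (m + 2) s +
      A * √(WI x₀ R (fun x => zf x₀ u x * zf x₀ u x) (m + 2) s *
      WI x₀ R (fun x => u x * u x) (m + 2) s)) ≤
      (- WI x₀ R (fun x => (zf x₀ p x + 2 * p x) * (u x * u x)) (m + 3) s
      - 2 * WI x₀ R (fun x => ff u p x * zf x₀ u x) (m + 3) s) / (4 * (m + 3)) ∧
    -(A * k * WI x₀ R (fun x => u x * u x) (m + 2) s) ≤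
      WI x₀ R (ef u p) (m + 3) s / (2 * (m + 3)) := by
  have hu1 : ContDiffOn ℝ 1 u Ω := hu.of_le (by norm_num)
  have huc := hu1.continuousOn.mono hK
  have hpc := hp.continuousOn.mono hK
  have hec := (ef_contDiffOn hΩ hu hp).continuousOn.mono hK
  have hzc := (zf_contDiffOn hΩ x₀ hu).continuousOn.mono hK
  have hzpc := (zf_continuousOn hΩ x₀ hp).mono hK
  have hfc := (ff_continuousOn hΩ hu hp).mono hK
  set H := WI x₀ R (fun x => u x * u x) (m + 2) s with hH
  set Z := WI x₀ R (fun x => zf x₀ u x * zf x₀ u x) (m + 2) s with hZ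
  have hH0 : 0 ≤ H := WI_nonneg _ _ fun x _ => mul_self_nonneg _
  have hH3 : WI x₀ R (fun x => u x * u x) (m + 3) s ≤ s * H :=
    WI_succ_le (huc.fun_mul huc) (m + 2) hs0.le fun x _ => mul_self_nonneg _
  have hb : (0 : ℝ) < (m : ℝ) + 3 := by positivity
  have hb1 : (1 : ℝ) ≤ (m : ℝ) + 3 := by linarith [Nat.cast_nonneg (α := ℝ) m]
  have hCS := WI_CS huc hzc (m + 2) s
  rw [← hH, ← hZ] at hCS
  have hA0 : 0 ≤ A := le_trans (by positivity) hAB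
  have hsV : s * V ≤ A := le_trans (by gcongr) hAV
  have hsB : s * B ≤ A := le_trans (by gcongr) hAB
  have hkb : k ^ 2 ≤ k * ((m : ℝ) + 3) := by rw [pow_two]; gcongr
  have hkH : k ^ 2 * B * (s * H) ≤ A * k * H * ((m : ℝ) + 3) := by
    calc k ^ 2 * B * (s * H) = k ^ 2 * (s * B) * H := by ring
      _ ≤ (k * ((m : ℝ) + 3)) * A * H := by gcongr
      _ = _ := by ring
  refine ⟨?_, ?_, ?_, ?_⟩
  · have h2 := identity2 hΩ hR hs hK hu hp m
    have h3 : |WI x₀ R (fun x => u x * ff u p x) (m + 3) s| ≤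
        V * WI x₀ R (fun x => u x * u x) (m + 3) s := by
      rw [← WI_smul]
      apply WI_abs_le (by fun_prop) (by fun_prop)
      intro x hx
      rw [abs_mul, ← abs_mul_abs_self (u x)]
      nlinarith [mul_le_mul_of_nonneg_left (hf x hx) (abs_nonneg (u x))]
    have h4 : WI x₀ R (fun x => u x * zf x₀ u x) (m + 2) s -
        WI x₀ R (ef u p) (m + 3) s / (2 * (m + 3)) =
        WI x₀ R (fun x => u x * ff u p x) (m + 3) s / (2 * (m + 3)) := by
      field_simp; linarith
    rw [h4, abs_div, abs_of_pos (show (0 : ℝ) < 2 * (m + 3) by positivity),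
      div_le_iff₀ (by positivity)]
    calc _ ≤ V * (s * H) := h3.trans (by gcongr)
      _ = (s * V) * H := by ring
      _ ≤ A * H := by gcongr
      _ ≤ A * H * (2 * (m + 3)) := le_mul_of_one_le_right (by positivity) (by linarith)
  · refine le_trans ?_ hCS
    apply sq_le_sq'
    · have := WI_abs_le (F := fun x => u x * zf x₀ u x) (G := fun x => |u x * zf x₀ u x|)
        (by fun_prop) (by fun_prop) (m + 2) s (fun x _ => le_rfl)
      exact (abs_le.1 this).1
    · exact WI_mono (by fun_prop) (by fun_prop) _ _ fun x _ => le_abs_self _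
  · have h1 : WI x₀ R (fun x => (zf x₀ p x + 2 * p x) * (u x * u x)) (m + 3) s ≤
        A * k * H * ((m : ℝ) + 3) := by
      calc _ ≤ k ^ 2 * B * WI x₀ R (fun x => u x * u x) (m + 3) s := by
            rw [← WI_smul]
            apply WI_mono (by fun_prop) (by fun_prop)
            intro x hx
            exact mul_le_mul_of_nonneg_right (hzB x hx) (mul_self_nonneg _)
        _ ≤ k ^ 2 * B * (s * H) := by gcongr
        _ ≤ _ := hkH
    have h2 : WI x₀ R (fun x => ff u p x * zf x₀ u x) (m + 3) s ≤ A * √(Z * H) := by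
      calc _ ≤ V * WI x₀ R (fun x => |u x * zf x₀ u x|) (m + 3) s := by
            rw [← WI_smul]
            apply WI_mono (by fun_prop) (by fun_prop)
            intro x hx
            refine (le_abs_self _).trans ?_
            rw [abs_mul, abs_mul, ← mul_assoc]
            exact mul_le_mul_of_nonneg_right (hf x hx) (abs_nonneg _)
        _ ≤ V * (s * WI x₀ R (fun x => |u x * zf x₀ u x|) (m + 2) s) := by
            gcongr
            exact WI_succ_le (by fun_prop) (m + 2) hs0.le fun x _ => abs_nonneg _
        _ = (s * V) * WI x₀ R (fun x => |u x * zf x₀ u x|) (m + 2) s := by ring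
        _ ≤ (s * V) * √(Z * H) := by
            gcongr
            exact Real.le_sqrt_of_sq_le hCS
        _ ≤ A * √(Z * H) := by gcongr
    have h3 : 0 ≤ A * √(Z * H) := by positivity
    have h4 : 0 ≤ A * k * H := by positivity
    rw [le_div_iff₀ (by positivity)]
    nlinarith
  · rw [le_div_iff₀ (by positivity)]
    have h1 : -(k ^ 2 * B) * WI x₀ R (fun x => u x * u x) (m + 3) s ≤
        WI x₀ R (ef u p) (m + 3) s := by
      rw [← WI_smul]
      apply WI_mono (by fun_prop) hec
      intro x hx
      unfold ef
      have h5 : 0 ≤ ∑ i, pderiv' i u x * pderiv' i u x :=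
        Finset.sum_nonneg fun i _ => mul_self_nonneg _
      have := mul_le_mul_of_nonneg_right (hpB x hx) (mul_self_nonneg (u x))
      linarith
    have h2 : k ^ 2 * B * WI x₀ R (fun x => u x * u x) (m + 3) s ≤ k ^ 2 * B * (s * H) := by
      gcongr
    have h4 : 0 ≤ A * k * H := by positivity
    nlinarith

lemma freq {n : ℕ} {Ω : Set (EuclideanSpace ℝ (Fin n))} (hΩ : IsOpen Ω)
    {x₀ : EuclideanSpace ℝ (Fin n)} {R : ℝ} (hR : 0 < R)
    (hK : Metric.closedBall x₀ R ⊆ Ω) {u p : EuclideanSpace ℝ (Fin n) → ℝ}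
    (hu : ContDiffOn ℝ 2 u Ω) (hp : ContDiffOn ℝ 1 p Ω) (m : ℕ)
    {k B V A : ℝ} (hk : 1 ≤ k) (hkm : k ≤ (m : ℝ) + 3) (hB0 : 0 ≤ B) (hV0 : 0 ≤ V)
    (hA : 1 ≤ A) (hAB : R ^ 2 * B ≤ A) (hAV : R ^ 2 * V ≤ A)
    (hpB : ∀ x ∈ Metric.closedBall x₀ R, p x ≤ k ^ 2 * B)
    (hzB : ∀ x ∈ Metric.closedBall x₀ R, zf x₀ p x + 2 * p x ≤ k ^ 2 * B)
    (hf : ∀ x ∈ Metric.closedBall x₀ R, |ff u p x| ≤ V * |u x|)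
    {a b c ε : ℝ} (hab : a < b) (hbc : b < c) (hc : exp c < R ^ 2) (hε : 0 < ε)
    (h : ℝ → ℝ)
    (hh : h = rsc ((m : ℝ) + 2 + n / 2) (WI x₀ R (fun x => u x * u x) (m + 2))) :
    log (h b + ε) - log (h a + ε) ≤ ((b - a) / (c - b) * exp (2 * A * (c - a))) *
      (log (h c + ε) - log (h b + ε) + (c - b) * ((5 * A + 1) * k)) := by
  subst hh
  set C := (m : ℝ) + 2 + n / 2 with hC
  have hu1 : ContDiffOn ℝ 1 u Ω := hu.of_le (by norm_num)
  have huc := hu1.continuousOn.mono hK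
  have hec := (ef_contDiffOn hΩ hu hp).continuousOn.mono hK
  have hsR : ∀ t ∈ Set.Icc a c, exp t < R ^ 2 := fun t ht =>
    lt_of_le_of_lt (exp_le_exp.2 ht.2) hc
  have bd := fun t (ht : t ∈ Set.Icc a c) => bounds hΩ hR (exp_pos t) (hsR t ht) hK hu hp m hk hkm
    hB0 hV0 hAB hAV hpB hzB hf
  have hbpos : (0 : ℝ) < (m : ℝ) + 3 := by positivity
  set H := WI x₀ R (fun x => u x * u x) (m + 2) with hH
  set J := WI x₀ R (fun x => u x * zf x₀ u x) (m + 2) with hJ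
  set Z := WI x₀ R (fun x => zf x₀ u x * zf x₀ u x) (m + 2) with hZ
  set P : ℝ → ℝ := fun s => WI x₀ R (ef u p) (m + 3) s / (2 * (m + 3)) with hP
  set E : ℝ → ℝ := fun s => (- WI x₀ R (fun x => (zf x₀ p x + 2 * p x) * (u x * u x)) (m + 3) s
      - 2 * WI x₀ R (fun x => ff u p x * zf x₀ u x) (m + 3) s) / (4 * (m + 3)) with hE
  have hH0 : ∀ s, 0 ≤ H s := fun s => WI_nonneg _ _ fun x _ => mul_self_nonneg _
  have hZ0 : ∀ s, 0 ≤ Z s := fun s => WI_nonneg _ _ fun x _ => mul_self_nonneg _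
  have hrH0 : ∀ t, 0 ≤ rsc C H t := fun t => mul_nonneg (exp_pos _).le (hH0 _)
  have hrZ0 : ∀ t, 0 ≤ rsc C Z t := fun t => mul_nonneg (exp_pos _).le (hZ0 _)
  have hA0 : 0 ≤ A := by linarith
  have hsq : ∀ t, exp (-(C * t)) * √(Z (exp t) * H (exp t)) ≤ √(rsc C Z t * (rsc C H t + ε)) := by
    intro t
    apply Real.le_sqrt_of_sq_le
    rw [mul_pow, Real.sq_sqrt (mul_nonneg (hZ0 _) (hH0 _))]
    have : rsc C Z t * rsc C H t ≤ rsc C Z t * (rsc C H t + ε) :=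
      mul_le_mul_of_nonneg_left (by linarith) (hrZ0 t)
    refine le_trans (le_of_eq ?_) this
    simp only [rsc]; ring
  refine ode hA hk hab hbc (fun t => rsc C H t + ε) (rsc C P) (rsc C J) (rsc C Z) (rsc C E)
    ?_ ?_ ?_ ?_ ?_ ?_ ?_
  · intro t ht
    have h1 := identity1 hΩ hR (hsR t ht) hK hu m
    refine (rsc_deriv (WI_deriv (huc.fun_mul huc) _ m) ?_).add_const ε
    simp only [hC]
    linarith
  · intro t ht
    have h1 := identity3 hΩ hR (hsR t ht) hK hu hp m
    have h2 : rsc C Z t + rsc C E t = rsc C (fun s => Z s + E s) t := by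
      simp only [rsc]; ring
    rw [h2]
    have hd := (WI_deriv hec (exp t) (m + 1)).div_const (2 * ((m : ℝ) + 3))
    refine rsc_deriv hd ?_
    simp only [hC, hP, hE, hZ, show m + 1 + 1 = m + 2 from rfl]
    push_cast
    generalize WI x₀ R (ef u p) (m + 2) (exp t) = W1 at h1 ⊢
    generalize WI x₀ R (ef u p) (m + 3) (exp t) = W2 at h1 ⊢
    generalize WI x₀ R (fun x => zf x₀ u x * zf x₀ u x) (m + 2) (exp t) = W3 at h1 ⊢
    generalize WI x₀ R (fun x => (zf x₀ p x + 2 * p x) * (u x * u x)) (m + 3) (exp t) = W4 at h1 ⊢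
    generalize WI x₀ R (fun x => ff u p x * zf x₀ u x) (m + 3) (exp t) = W5 at h1 ⊢
    generalize exp t = S at h1 ⊢
    have e : ∀ y : ℝ, y * (4 * ((m : ℝ) + 3)) = 0 → y = 0 := fun y hy =>
      (mul_eq_zero.1 hy).resolve_right (by positivity)
    rw [← sub_eq_zero]
    apply e
    have e1 : S * (((m : ℝ) + 1 + 2) * W1 / (2 * ((m : ℝ) + 3))) = S * W1 / 2 := by
      field_simp; ring
    have e2 : W2 / (2 * ((m : ℝ) + 3)) * (4 * ((m : ℝ) + 3)) = 2 * W2 := by field_simp; ring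
    have e3 : (-W4 - 2 * W5) / (4 * ((m : ℝ) + 3)) * (4 * ((m : ℝ) + 3)) = -W4 - 2 * W5 := by
      field_simp
    rw [e1]
    linear_combination h1 - ((m : ℝ) + 2 + n / 2) * e2 - e3
  · intro t ht
    have := hrH0 t
    show 0 < rsc C H t + ε
    linarith
  · intro t ht
    have h1 := (bd t ht).1
    have h2 : rsc C J t - rsc C P t = exp (-(C * t)) * (J (exp t) - P (exp t)) := by
      simp only [rsc]; ring
    rw [h2, abs_mul, abs_of_pos (exp_pos _)]
    have h3 := mul_le_mul_of_nonneg_left h1 (exp_pos (-(C * t))).le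
    have h4 : 0 ≤ A * ε := by positivity
    refine h3.trans ?_
    simp only [rsc]; linarith
  · intro t ht
    have h1 := (bd t ht).2.1
    have : rsc C Z t * rsc C H t ≤ rsc C Z t * (rsc C H t + ε) :=
      mul_le_mul_of_nonneg_left (by linarith) (hrZ0 t)
    refine le_trans ?_ this
    have h3 := mul_le_mul_of_nonneg_left h1 (sq_nonneg (exp (-(C * t))))
    simp only [rsc]; linarith
  · intro t ht
    have h1 := (bd t ht).2.2.1
    have h3 := mul_le_mul_of_nonneg_left h1 (exp_pos (-(C * t))).le
    have h4 := mul_le_mul_of_nonneg_left (hsq t) hA0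
    have h5 : 0 ≤ A * k * ε := by positivity
    simp only [rsc] at h4 ⊢
    linarith
  · intro t ht
    have h1 := (bd t ht).2.2.2
    have h3 := mul_le_mul_of_nonneg_left h1 (exp_pos (-(C * t))).le
    have h5 : 0 ≤ A * k * ε := by positivity
    simp only [rsc]
    linarith

lemma u_int {n : ℕ} {x₀ : EuclideanSpace ℝ (Fin n)} {R ρ : ℝ}
    {u : EuclideanSpace ℝ (Fin n) → ℝ} (hu : ContinuousOn u (Metric.closedBall x₀ R))
    (hρ : ρ ≤ R) : IntegrableOn (fun x => u x ^ 2) (Metric.ball x₀ ρ) :=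
  ((hu.pow 2).integrableOn_compact (isCompact_closedBall _ _)).mono_set
    ((Metric.ball_subset_ball hρ).trans Metric.ball_subset_closedBall)

lemma WI_upper {n : ℕ} {x₀ : EuclideanSpace ℝ (Fin n)} {R ρ : ℝ}
    {u : EuclideanSpace ℝ (Fin n) → ℝ} (hu : ContinuousOn u (Metric.closedBall x₀ R))
    (h0 : 0 < ρ) (hρ : ρ ≤ R) (m : ℕ) :
    WI x₀ R (fun x => u x * u x) (m + 2) (ρ ^ 2) ≤
      (ρ ^ 2) ^ (m + 2) * ∫ x in Metric.ball x₀ ρ, (u x) ^ 2 := by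
  have hsub : Metric.ball x₀ ρ ⊆ Metric.closedBall x₀ R :=
    (Metric.ball_subset_ball hρ).trans Metric.ball_subset_closedBall
  unfold WI
  rw [setIntegral_eq_of_subset_of_forall_sdiff_eq_zero Metric.isClosed_closedBall.measurableSet
    hsub, ← integral_const_mul]
  · apply setIntegral_mono_on ((integrable_wt (hu.fun_mul hu) _ _).mono_set hsub)
      ((u_int hu hρ).const_mul _) Metric.isOpen_ball.measurableSet
    intro x _
    have h1 := pow_le_pow_left₀ (wt_nonneg x₀ (ρ ^ 2) x) (wt_le x₀ (sq_nonneg ρ) x) (m + 2)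
    have h2 := mul_le_mul_of_nonneg_left h1 (mul_self_nonneg (u x))
    linarith
  · intro x hx
    have hx2 := hx.2
    rw [Metric.mem_ball, dist_eq_norm, not_lt] at hx2
    have : wt x₀ (ρ ^ 2) x = 0 := max_eq_right (by nlinarith)
    rw [this]; simp

lemma WI_lower {n : ℕ} {x₀ : EuclideanSpace ℝ (Fin n)} {R ρ s : ℝ}
    {u : EuclideanSpace ℝ (Fin n) → ℝ} (hu : ContinuousOn u (Metric.closedBall x₀ R))
    (h0 : 0 < ρ) (hρ : ρ ≤ R) (hs : ρ ^ 2 ≤ s) (m : ℕ) :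
    (s - ρ ^ 2) ^ (m + 2) * ∫ x in Metric.ball x₀ ρ, (u x) ^ 2 ≤
    WI x₀ R (fun x => u x * u x) (m + 2) s := by
  have hsub : Metric.ball x₀ ρ ⊆ Metric.closedBall x₀ R :=
    (Metric.ball_subset_ball hρ).trans Metric.ball_subset_closedBall
  have hi := integrable_wt (hu.fun_mul hu) s (m + 2)
  have h1 : ∫ x in Metric.ball x₀ ρ, (u x * u x) * wt x₀ s x ^ (m + 2) ≤
      WI x₀ R (fun x => u x * u x) (m + 2) s := by
    apply setIntegral_mono_set hi
    · filter_upwards with x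
      exact mul_nonneg (mul_self_nonneg _) (pow_nonneg (wt_nonneg _ _ _) _)
    · exact hsub.eventuallyLE
  refine le_trans ?_ h1
  rw [← integral_const_mul]
  apply setIntegral_mono_on ((u_int hu hρ).const_mul _) (hi.mono_set hsub)
    Metric.isOpen_ball.measurableSet
  intro x hx
  rw [Metric.mem_ball, dist_eq_norm] at hx
  have h3 : s - ρ ^ 2 ≤ wt x₀ s x := le_trans (by nlinarith [norm_nonneg (x - x₀)])
    (le_max_left _ _)
  have h4 := pow_le_pow_left₀ (sub_nonneg.2 hs) h3 (m + 2)
  have h2 := mul_le_mul_of_nonneg_left h4 (mul_self_nonneg (u x))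
  linarith

lemma exp_step {x y z Γ D : ℝ} (hx : 0 ≤ x) (hy : 0 ≤ y) (hz : 0 ≤ z) (hΓ : 0 < Γ) (hD : 0 ≤ D)
    (h : ∀ ε > 0, log (y + ε) - log (x + ε) ≤ Γ * (log (z + ε) - log (y + ε) + D)) :
    y ≤ exp D * x ^ (1 / (1 + Γ)) * z ^ (1 - 1 / (1 + Γ)) := by
  have hα0 : 0 < 1 / (1 + Γ) := by positivity
  have hα1 : 0 < 1 - 1 / (1 + Γ) := by
    rw [sub_pos, div_lt_one (by positivity)]; linarith
  have hα : (1 / (1 + Γ)) * (1 + Γ) = 1 := by field_simp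
  set α := 1 / (1 + Γ) with hαd
  have key : ∀ ε > 0, y + ε ≤ exp D * (x + ε) ^ α * (z + ε) ^ (1 - α) := by
    intro ε hε
    have h1 := h ε hε
    have hL : log (y + ε) ≤ D + log (x + ε) * α + log (z + ε) * (1 - α) := by
      have h2 := mul_le_mul_of_nonneg_left h1 hα0.le
      have h3 : α * D ≥ 0 := by positivity
      have h4 : α * Γ = 1 - α := by linarith
      have h5 : α * (Γ * (log (z + ε) - log (y + ε) + D)) =
        (1 - α) * (log (z + ε) - log (y + ε) + D) := by rw [← mul_assoc, h4]
      rw [h5] at h2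
      linarith
    rw [rpow_def_of_pos (by linarith), rpow_def_of_pos (by linarith), ← exp_add, ← exp_add,
      ← Real.log_le_iff_le_exp (by linarith)]
    exact hL
  have c1 : Continuous fun ε : ℝ => y + ε := by fun_prop
  have c2 : Continuous fun ε : ℝ => exp D * (x + ε) ^ α * (z + ε) ^ (1 - α) := by
    refine (continuous_const.mul ?_).mul ?_
    · exact Continuous.rpow_const (by fun_prop) fun _ => Or.inr hα0.le
    · exact Continuous.rpow_const (by fun_prop) fun _ => Or.inr hα1.le
  have t1 := (c1.tendsto 0).mono_left (nhdsWithin_le_nhds (s := Set.Ioi 0))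
  have t2 := (c2.tendsto 0).mono_left (nhdsWithin_le_nhds (s := Set.Ioi 0))
  have := le_of_tendsto_of_tendsto t1 t2 (by
    filter_upwards [self_mem_nhdsWithin] with ε hε using key ε hε)
  simpa using this

lemma zf_eq {n : ℕ} (x₀ : EuclideanSpace ℝ (Fin n)) (q : EuclideanSpace ℝ (Fin n) → ℝ)
    (x : EuclideanSpace ℝ (Fin n)) : zf x₀ q x = fderiv ℝ q x (x - x₀) := by
  have h : x - x₀ = ∑ i, (x i - x₀ i) • EuclideanSpace.single i (1 : ℝ) := by
    ext j
    simp [Finset.sum_apply, Pi.single_apply]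
  rw [h, map_sum]
  simp [zf, pderiv']

lemma zf_bound {n : ℕ} {x₀ : EuclideanSpace ℝ (Fin n)} {q : EuclideanSpace ℝ (Fin n) → ℝ}
    {x : EuclideanSpace ℝ (Fin n)} {k Q R : ℝ} (hd : DifferentiableAt ℝ q x)
    (hg : ‖gradient q x‖ ≤ Q) (hx : ‖x - x₀‖ ≤ R) (hQ : 0 ≤ Q) :
    zf x₀ (fun x => k ^ 2 * q x) x ≤ k ^ 2 * (Q * R) := by
  have h1 : zf x₀ (fun x => k ^ 2 * q x) x = k ^ 2 * zf x₀ q x := by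
    unfold zf
    rw [Finset.mul_sum]
    refine Finset.sum_congr rfl fun i _ => ?_
    rw [pd_const_mul _ _ hd]; ring
  rw [h1, zf_eq]
  have h2 : ‖fderiv ℝ q x‖ ≤ Q := by
    rw [← (InnerProductSpace.toDual ℝ (EuclideanSpace ℝ (Fin n))).symm.norm_map]
    exact hg
  refine mul_le_mul_of_nonneg_left ?_ (sq_nonneg k)
  have h3 := ContinuousLinearMap.le_opNorm (fderiv ℝ q x) (x - x₀)
  rw [Real.norm_eq_abs] at h3
  refine (le_abs_self _).trans (h3.trans ?_)
  gcongr

lemma radius_bound {n : ℕ} (hn : 2 ≤ n) {Ω : Set (EuclideanSpace ℝ (Fin n))}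
    (hΩb : Bornology.IsBounded Ω) :
    ∃ R0 : ℝ, 0 ≤ R0 ∧ ∀ (x₀ : EuclideanSpace ℝ (Fin n)) (R : ℝ), 0 < R →
      Metric.closedBall x₀ R ⊆ Ω → R ≤ R0 := by
  refine ⟨Metric.diam Ω, Metric.diam_nonneg, fun x₀ R hR hK => ?_⟩
  have i : Fin n := ⟨0, by omega⟩
  have h1 : x₀ ∈ Ω := hK (Metric.mem_closedBall_self hR.le)
  have h2 : x₀ + EuclideanSpace.single i R ∈ Ω := hK (by simp [abs_of_pos hR])
  have h3 := Metric.dist_le_diam_of_mem hΩb h2 h1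
  simpa [abs_of_pos hR] using h3

lemma core {n : ℕ} {Ω : Set (EuclideanSpace ℝ (Fin n))} (hΩ : IsOpen Ω)
    {x₀ : EuclideanSpace ℝ (Fin n)} {r : ℝ} (hr : 0 < r)
    (hK : Metric.closedBall x₀ (4 * r) ⊆ Ω) {u p : EuclideanSpace ℝ (Fin n) → ℝ}
    (hu : ContDiffOn ℝ 2 u Ω) (hp : ContDiffOn ℝ 1 p Ω)
    {k B V A : ℝ} (hk : 1 ≤ k) (hB0 : 0 ≤ B) (hV0 : 0 ≤ V)
    (hA : 1 ≤ A) (hAB : (4 * r) ^ 2 * B ≤ A) (hAV : (4 * r) ^ 2 * V ≤ A)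
    (hpB : ∀ x ∈ Metric.closedBall x₀ (4 * r), p x ≤ k ^ 2 * B)
    (hzB : ∀ x ∈ Metric.closedBall x₀ (4 * r), zf x₀ p x + 2 * p x ≤ k ^ 2 * B)
    (hf : ∀ x ∈ Metric.closedBall x₀ (4 * r), |ff u p x| ≤ V * |u x|) {Γ α : ℝ}
    (hΓ : Γ = log 8 / log 2 * exp (2 * A * log 16)) (hα : α = 1 / (1 + Γ)) :
    ∫ x in Metric.ball x₀ r, (u x) ^ 2 ≤ exp ((5 * A + 5 + 2 * n) * k) *
      (∫ x in Metric.ball x₀ (r / 2), (u x) ^ 2) ^ α *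
      (∫ x in Metric.ball x₀ (2 * r), (u x) ^ 2) ^ (1 - α) := by
  have hR : 0 < 4 * r := by linarith
  have huc : ContinuousOn u (Metric.closedBall x₀ (4 * r)) := hu.continuousOn.mono hK
  obtain ⟨m, hm1, hm2⟩ : ∃ m : ℕ, k ≤ (m : ℝ) + 3 ∧ (m : ℝ) ≤ k + 1 :=
    ⟨⌈k⌉₊, by linarith [Nat.le_ceil k], (Nat.ceil_lt_add_one (by linarith)).le⟩
  have hl2 : 0 < log 2 := log_pos (by norm_num)
  have hl2' : log 2 ≤ 1 := by linarith [Real.log_two_lt_d9]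
  have hl8 : log 8 = 3 * log 2 := by
    rw [show (8 : ℝ) = 2 ^ 3 by norm_num, log_pow]; norm_num
  have hl16 : log 16 = 4 * log 2 := by
    rw [show (16 : ℝ) = 2 ^ 4 by norm_num, log_pow]; norm_num
  have hΓ0 : 0 < Γ := by rw [hΓ, hl8]; positivity
  set T := log (r ^ 2) with hT
  have hr2 : 0 < r ^ 2 := by positivity
  have heT : exp T = r ^ 2 := exp_log hr2
  have he2 : exp (log 2) = 2 := exp_log (by norm_num)
  have hea : exp (T - 2 * log 2) = (r / 2) ^ 2 := by
    rw [exp_sub, heT, two_mul, exp_add, he2]; ring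
  have heb : exp (T + log 2) = 2 * r ^ 2 := by
    rw [exp_add, heT, he2]; ring
  have hec : exp (T + 2 * log 2) = (2 * r) ^ 2 := by
    rw [exp_add, heT, two_mul, exp_add, he2]; ring
  set N : ℝ := n / 2 with hN
  have hN0 : 0 ≤ N := by positivity
  set C := (m : ℝ) + 2 + N with hC
  set H := WI x₀ (4 * r) (fun x => u x * u x) (m + 2) with hH
  set D := log 2 * ((5 * A + 1) * k) with hD
  have hD0 : 0 ≤ D := by positivity
  have hh0 : ∀ t, 0 ≤ rsc C H t := fun t => mul_nonneg (exp_pos _).le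
    (WI_nonneg _ _ fun x _ => mul_self_nonneg _)
  have hstep := exp_step (hh0 (T - 2 * log 2)) (hh0 (T + log 2)) (hh0 (T + 2 * log 2)) hΓ0 hD0
    (by
      intro ε hε
      have h1 := freq hΩ hR hK hu hp m hk hm1 hB0 hV0 hA hAB hAV hpB hzB hf
        (a := T - 2 * log 2) (b := T + log 2) (c := T + 2 * log 2) (by linarith) (by linarith)
        (by rw [hec]; nlinarith) hε _ rfl
      have e1 : T + log 2 - (T - 2 * log 2) = log 8 := by rw [hl8]; ring
      have e2 : T + 2 * log 2 - (T + log 2) = log 2 := by ring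
      have e3 : T + 2 * log 2 - (T - 2 * log 2) = log 16 := by rw [hl16]; ring
      rw [e1, e2, e3, ← hΓ] at h1
      exact h1)
  rw [← hα] at hstep
  set Ua := ∫ x in Metric.ball x₀ (r / 2), (u x) ^ 2 with hUa
  set Ub := ∫ x in Metric.ball x₀ r, (u x) ^ 2 with hUb
  set Uc := ∫ x in Metric.ball x₀ (2 * r), (u x) ^ 2 with hUc
  have hUa0 : 0 ≤ Ua := integral_nonneg fun x => sq_nonneg _
  have hUb0 : 0 ≤ Ub := integral_nonneg fun x => sq_nonneg _
  have hUc0 : 0 ≤ Uc := integral_nonneg fun x => sq_nonneg _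
  have hpw : ∀ t : ℝ, exp (-(C * t)) * exp t ^ (m + 2) = exp (-(N * t)) := by
    intro t
    rw [← exp_nat_mul, ← exp_add]
    congr 1
    push_cast
    rw [hC]; ring
  set G := exp (-(N * (T - 2 * log 2))) with hG
  have ha : rsc C H (T - 2 * log 2) ≤ G * Ua := by
    unfold rsc
    rw [hG, ← hpw, mul_assoc, hea]
    exact mul_le_mul_of_nonneg_left (WI_upper huc (by linarith) (by linarith) m) (exp_pos _).le
  have hc : rsc C H (T + 2 * log 2) ≤ G * Uc := by
    have : rsc C H (T + 2 * log 2) ≤ exp (-(N * (T + 2 * log 2))) * Uc := by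
      unfold rsc
      rw [← hpw, mul_assoc, hec]
      exact mul_le_mul_of_nonneg_left (WI_upper huc (by linarith) (by linarith) m) (exp_pos _).le
    refine this.trans (mul_le_mul_of_nonneg_right (exp_le_exp.2 ?_) hUc0)
    nlinarith [mul_nonneg hN0 hl2.le]
  have hb : exp (-(C * log 2)) * exp (-(N * T)) * Ub ≤ rsc C H (T + log 2) := by
    have h1 := WI_lower (s := 2 * r ^ 2) huc hr (by linarith) (by linarith) m
    unfold rsc
    have e : exp (-(C * log 2)) * exp (-(N * T)) = exp (-(C * (T + log 2))) * (r ^ 2) ^ (m + 2) := by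
      rw [← hpw T, heT, ← mul_assoc, ← exp_add]
      congr 2; ring
    rw [e, heb, mul_assoc]
    refine mul_le_mul_of_nonneg_left (le_trans (le_of_eq ?_) h1) (exp_pos _).le
    congr 2; ring
  have hα0 : 0 < α := by rw [hα]; positivity
  have hα1 : 0 < 1 - α := by
    rw [hα, sub_pos, div_lt_one (by positivity)]; linarith
  have hG0 : 0 < G := exp_pos _
  have hfin : exp (-(C * log 2)) * exp (-(N * T)) * Ub ≤ exp D * G * (Ua ^ α * Uc ^ (1 - α)) := by
    calc _ ≤ exp D * rsc C H (T - 2 * log 2) ^ α * rsc C H (T + 2 * log 2) ^ (1 - α) :=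
          hb.trans hstep
      _ ≤ exp D * (G * Ua) ^ α * (G * Uc) ^ (1 - α) := by
          have h1 := rpow_le_rpow (hh0 _) ha hα0.le
          have h2 := rpow_le_rpow (hh0 _) hc hα1.le
          have h3 := rpow_nonneg (hh0 (T + 2 * log 2)) (1 - α)
          gcongr
      _ = exp D * (G ^ α * G ^ (1 - α)) * (Ua ^ α * Uc ^ (1 - α)) := by
          rw [mul_rpow hG0.le hUa0, mul_rpow hG0.le hUc0]; ring
      _ = _ := by
          rw [← rpow_add hG0, show α + (1 - α) = 1 by ring, rpow_one]
  have hP0 : 0 ≤ Ua ^ α * Uc ^ (1 - α) := mul_nonneg (rpow_nonneg hUa0 _) (rpow_nonneg hUc0 _)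
  have e1 : Ub = exp (C * log 2 + N * T) * (exp (-(C * log 2)) * exp (-(N * T)) * Ub) := by
    rw [← mul_assoc, ← exp_add, ← exp_add]
    have : C * log 2 + N * T + (-(C * log 2) + -(N * T)) = 0 := by ring
    rw [this]; simp
  rw [e1]
  calc _ ≤ exp (C * log 2 + N * T) * (exp D * G * (Ua ^ α * Uc ^ (1 - α))) := by gcongr
    _ = exp (C * log 2 + D + 2 * N * log 2) * (Ua ^ α * Uc ^ (1 - α)) := by
        have e4 : exp (C * log 2 + D + 2 * N * log 2) = exp (C * log 2 + N * T) * exp D * G := by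
          rw [hG, ← exp_add, ← exp_add]
          congr 1; ring
        rw [e4]; ring
    _ ≤ exp ((5 * A + 5 + 2 * n) * k) * (Ua ^ α * Uc ^ (1 - α)) := by
        refine mul_le_mul_of_nonneg_right (exp_le_exp.2 ?_) hP0
        have hn0 : (0 : ℝ) ≤ n := Nat.cast_nonneg n
        have h1 : C * log 2 + D + 2 * N * log 2 =
          log 2 * (C + (5 * A + 1) * k + 2 * N) := by rw [hD]; ring
        rw [h1]
        have h2 : 0 ≤ C + (5 * A + 1) * k + 2 * N := by positivity
        have h3 : C + (5 * A + 1) * k + 2 * N ≤ (5 * A + 5 + 2 * n) * k := by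
          have h4 := mul_le_mul_of_nonneg_left hk hn0
          rw [hC, hN]
          linarith
        exact (mul_le_of_le_one_left h2 hl2').trans h3
    _ = _ := by ring

/-- Three-balls inequality with explicit frequency dependence (Lemma 2.3, interior
version). -/
theorem three_balls_inequality_frequency (n : ℕ) (hn : 2 ≤ n)
    (Ω : Set (EuclideanSpace ℝ (Fin n))) (hΩo : IsOpen Ω) (hΩb : Bornology.IsBounded Ω)
    (κ Q V₀ : ℝ) (hκ : 1 < κ) :
    ∃ α ∈ Set.Ioo (0 : ℝ) 1, ∃ C > (1 : ℝ),
      ∀ q V : EuclideanSpace ℝ (Fin n) → ℝ,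
        ContDiffOn ℝ 1 q Ω →
        (∀ x ∈ Ω, κ⁻¹ < q x ∧ q x < κ) →
        (∀ x ∈ Ω, |q x| ≤ Q ∧ ‖gradient q x‖ ≤ Q) →
        Measurable V →
        (∀ x ∈ Ω, |V x| ≤ V₀) →
      ∀ k : ℝ, 1 ≤ k →
      ∀ u : EuclideanSpace ℝ (Fin n) → ℝ,
        ContDiffOn ℝ 2 u Ω →
        (∀ x ∈ Ω, lap u x + k ^ 2 * q x * u x + V x * u x = 0) →
      ∀ (x₀ : EuclideanSpace ℝ (Fin n)) (r : ℝ), 0 < r →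
        Metric.closedBall x₀ (4 * r) ⊆ Ω →
        (∫ x in Metric.ball x₀ r, (u x) ^ 2) ^ ((1 : ℝ) / 2)
          ≤ C * Real.exp (C * k)
            * ((∫ x in Metric.ball x₀ (2 * r), (u x) ^ 2) ^ ((1 : ℝ) / 2)) ^ (1 - α)
            * ((∫ x in Metric.ball x₀ (r / 2), (u x) ^ 2) ^ ((1 : ℝ) / 2)) ^ α := by
  obtain ⟨R0, hR0, hrad⟩ := radius_bound hn hΩb
  obtain ⟨B, hB⟩ : ∃ B : ℝ, B = |Q| * R0 + 2 * |Q| := ⟨_, rfl⟩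
  have hB0 : 0 ≤ B := by rw [hB]; positivity
  obtain ⟨A, hA⟩ : ∃ A : ℝ, A = 1 + R0 ^ 2 * B + R0 ^ 2 * |V₀| := ⟨_, rfl⟩
  have hA1 : 1 ≤ A := by
    have : 0 ≤ R0 ^ 2 * B + R0 ^ 2 * |V₀| := by positivity
    linarith
  obtain ⟨Γ, hΓ⟩ : ∃ Γ : ℝ, Γ = log 8 / log 2 * exp (2 * A * log 16) := ⟨_, rfl⟩
  have hΓ0 : 0 < Γ := by
    rw [hΓ]
    have h1 : 0 < log 8 := log_pos (by norm_num)
    have h2 : 0 < log 2 := log_pos (by norm_num)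
    positivity
  obtain ⟨α, hα⟩ : ∃ α : ℝ, α = 1 / (1 + Γ) := ⟨_, rfl⟩
  have hα0 : 0 < α := by rw [hα]; positivity
  have hα1 : α < 1 := by
    rw [hα, div_lt_one (by positivity)]; linarith
  have hn0 : (0 : ℝ) ≤ n := Nat.cast_nonneg n
  obtain ⟨M, hM⟩ : ∃ M : ℝ, M = 5 * A + 5 + 2 * n := ⟨_, rfl⟩
  have hM1 : 1 < M := by linarith
  refine ⟨α, ⟨hα0, hα1⟩, M, hM1, ?_⟩
  intro q V hq _ hqQ _ hV k hk u hu heq x₀ r hr hK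
  have hr4 : 4 * r ≤ R0 := hrad x₀ (4 * r) (by linarith) hK
  have hQ : ∀ x ∈ Ω, |q x| ≤ |Q| ∧ ‖gradient q x‖ ≤ |Q| := fun x hx =>
    ⟨(hqQ x hx).1.trans (le_abs_self _), (hqQ x hx).2.trans (le_abs_self _)⟩
  have hsq : (4 * r) ^ 2 ≤ R0 ^ 2 := by gcongr
  have hQR : 0 ≤ |Q| * R0 := by positivity
  have hcore := core hΩo hr hK hu (p := fun x => k ^ 2 * q x) (contDiffOn_const.mul hq)
    (V := |V₀|) hk hB0 (abs_nonneg _) hA1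
    (by
      have h1 := mul_le_mul_of_nonneg_right hsq hB0
      have h2 : 0 ≤ R0 ^ 2 * |V₀| := by positivity
      linarith)
    (by
      have h1 := mul_le_mul_of_nonneg_right hsq (abs_nonneg V₀)
      have h2 : 0 ≤ R0 ^ 2 * B := by positivity
      linarith)
    (by
      intro x hx
      refine mul_le_mul_of_nonneg_left ?_ (sq_nonneg k)
      have := (le_abs_self (q x)).trans (hQ x (hK hx)).1
      have := abs_nonneg Q
      linarith)
    (by
      intro x hx
      have hd : DifferentiableAt ℝ q x :=
        (hq.contDiffAt (hΩo.mem_nhds (hK hx))).differentiableAt (by norm_num)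
      have hx' : ‖x - x₀‖ ≤ R0 := by
        rw [Metric.mem_closedBall, dist_eq_norm] at hx
        linarith
      have h1 := zf_bound (k := k) hd (hQ x (hK hx)).2 hx' (abs_nonneg Q)
      have h2 := mul_le_mul_of_nonneg_left ((le_abs_self (q x)).trans (hQ x (hK hx)).1)
        (sq_nonneg k)
      rw [hB]
      linarith)
    (by
      intro x hx
      have h1 : ff u (fun x => k ^ 2 * q x) x = -(V x * u x) := by
        unfold ff
        linarith [heq x (hK hx)]
      rw [h1, abs_neg, abs_mul]
      exact mul_le_mul_of_nonneg_right ((hV x (hK hx)).trans (le_abs_self _)) (abs_nonneg _))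
    hΓ hα
  rw [← hM] at hcore
  have hUa0 : 0 ≤ ∫ x in Metric.ball x₀ (r / 2), (u x) ^ 2 := integral_nonneg fun x => sq_nonneg _
  have hUb0 : 0 ≤ ∫ x in Metric.ball x₀ r, (u x) ^ 2 := integral_nonneg fun x => sq_nonneg _
  have hUc0 : 0 ≤ ∫ x in Metric.ball x₀ (2 * r), (u x) ^ 2 := integral_nonneg fun x => sq_nonneg _
  generalize (∫ x in Metric.ball x₀ (r / 2), (u x) ^ 2) = Ua at *
  generalize (∫ x in Metric.ball x₀ r, (u x) ^ 2) = Ub at *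
  generalize (∫ x in Metric.ball x₀ (2 * r), (u x) ^ 2) = Uc at *
  have h1 := rpow_le_rpow hUb0 hcore (show (0 : ℝ) ≤ 1 / 2 by norm_num)
  have ha := rpow_nonneg hUa0 α
  have hc := rpow_nonneg hUc0 (1 - α)
  rw [mul_rpow (mul_nonneg (exp_pos _).le ha) hc, mul_rpow (exp_pos _).le ha] at h1
  rw [← rpow_mul hUa0, ← rpow_mul hUc0, mul_comm ((1 : ℝ) / 2) α, mul_comm ((1 : ℝ) / 2) (1 - α),
    rpow_mul hUa0, rpow_mul hUc0]
  have ha2 := rpow_nonneg ha (1 / 2)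
  have hc2 := rpow_nonneg hc (1 / 2)
  have h2 : exp (M * k) ^ ((1 : ℝ) / 2) ≤ M * exp (M * k) := by
    have hMk : 0 ≤ M * k := by nlinarith
    calc _ ≤ exp (M * k) ^ (1 : ℝ) := rpow_le_rpow_of_exponent_le (one_le_exp hMk) (by norm_num)
      _ = exp (M * k) := rpow_one _
      _ ≤ _ := le_mul_of_one_le_left (exp_pos _).le hM1.le
  calc _ ≤ _ := h1
    _ ≤ (M * exp (M * k)) * (Ua ^ α) ^ ((1 : ℝ) / 2) * (Uc ^ (1 - α)) ^ ((1 : ℝ) / 2) := by gcongr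
    _ = _ := by ring
end

section
/- Iteration lemma for three-balls chains (used in Step 2 of the proof of Proposition 2.1): Let α ∈ (0,1), K ≥ 1, M > 0, N ∈ ℕ, and let a₀, a₁, …, a_N be nonnegative real numbers such that aⱼ ≤ M for all j and a_{j+1} ≤ K aⱼ^α M^{1-α} for all 0 ≤ j < N. Then a_N ≤ K^{1/(1-α)} a₀^{α^N} M^{1-α^N}. -/
open Real

/-- Iteration lemma for three-balls chains (used in Step 2 of the proof of
Proposition 2.1). -/
theorem three_balls_iteration (α K M : ℝ) (hα : α ∈ Set.Ioo (0 : ℝ) 1) (hK : 1 ≤ K)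
    (hM : 0 < M) (N : ℕ) (a : ℕ → ℝ)
    (ha0 : ∀ j ≤ N, 0 ≤ a j) (haM : ∀ j ≤ N, a j ≤ M)
    (hrec : ∀ j < N, a (j + 1) ≤ K * a j ^ α * M ^ (1 - α)) :
    a N ≤ K ^ (1 / (1 - α)) * a 0 ^ (α ^ N) * M ^ (1 - α ^ N) := by
  obtain ⟨h0, h1⟩ := hα
  have hK0 : 0 < K := by linarith
  have h1α : 0 < 1 - α := by linarith
  have key : ∀ j, j ≤ N →
      a j ≤ K ^ (1 / (1 - α)) * a 0 ^ (α ^ j) * M ^ (1 - α ^ j) := by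
    intro j
    induction j with
    | zero =>
      intro h
      have hz := ha0 0 h
      have hk : 1 ≤ K ^ (1 / (1 - α)) := Real.one_le_rpow hK (by positivity)
      simp only [pow_zero, sub_self, Real.rpow_one, Real.rpow_zero, mul_one]
      nlinarith
    | succ j ih =>
      intro h
      have hz := ha0 0 (by omega)
      have hj := ih (by omega)
      have hp : 0 ≤ a 0 ^ (α ^ j) := Real.rpow_nonneg hz _
      have e : K * (K ^ (1 / (1 - α)) * a 0 ^ (α ^ j) * M ^ (1 - α ^ j)) ^ α * M ^ (1 - α)
          = K ^ (1 / (1 - α)) * a 0 ^ (α ^ (j + 1)) * M ^ (1 - α ^ (j + 1)) := by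
        rw [Real.mul_rpow (by positivity) (by positivity),
          Real.mul_rpow (by positivity) hp, ← Real.rpow_mul hK0.le, ← Real.rpow_mul hz,
          ← Real.rpow_mul hM.le]
        have e1 : K ^ (1 / (1 - α)) = K * K ^ (1 / (1 - α) * α) := by
          rw [← Real.rpow_one_add' hK0.le (by positivity)]
          congr 1
          field_simp
          ring
        have e2 : M ^ (1 - α ^ (j + 1)) = M ^ ((1 - α ^ j) * α) * M ^ (1 - α) := by
          rw [← Real.rpow_add hM]
          congr 1
          ring
        rw [e2, pow_succ]
        rw [e1]
        ring
      rw [← e]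
      refine (hrec j (by omega)).trans ?_
      have := Real.rpow_le_rpow (ha0 j (by omega)) hj h0.le
      gcongr
  exact key N le_rfl
end
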